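/- arXiv:1408.4252 — 6 statements merged into one kernel-verified Lean document; each statement's English description precedes it below -/
import Mathlib

section
/- Let d ≥ 1, let f : B(0,2) → ℝ^d be a C^∞ map that is a diffeomorphism onto its image, and let θ > 0, χ′ > 0. Then there exist ρ > 0 and η > 0 with the following property. For every compact subset Q of the open unit ball B(0,1) that is homeomorphic to the closed unit ball of ℝ^d and has diameter in (0, ρ), and every A ∈ GL(d,ℝ) such that ‖A − Df(x₀)‖ < η for some x₀ ∈ Q, there exist b ∈ ℝ^d and a C^∞ map g : B(0,2) → ℝ^d that is a diffeomorphism onto its image such that: g(x) = f(x) for every x ∈ B(0,2) whose distance to Q is at least χ′·diam(Q); g(z) = A·z + b for every z ∈ Q; and ‖Dg(x) − Df(x)‖ ≤ θ for all x ∈ B(0,2). -/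
/-!
Write `δ = diam Q`, `χ = min χ' 1`, `b = f x₀ - A x₀`, and let `h z = A z + b - f z` be the error of
the affine approximation. The map is `g = f + φ • h`, where `φ` is a smooth cutoff equal to `1` on
`Q` and to `0` at distance at least `χ δ` from `Q`.

Mollifying a Lipschitz cutoff gives `‖Dφ‖ ≤ 3 / (χ δ)` (`exists_smooth_cutoff`). On
`closedBall x₀ (2 δ)`, which contains the support of `φ`, uniform continuity of `Df` gives
`‖Dh‖ ≤ 2 ε` with `ε` as small as desired, hence `‖h‖ ≤ 4 ε δ` because `h x₀ = 0`. The product rule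
then yields `‖D(φ • h)‖ ≤ 2 ε (1 + 6 / χ)`: the factors `δ` cancel, so this is at most any
prescribed `τ > 0` uniformly in `Q`.

It remains to see that a perturbation which is `C¹`-small and supported in the compact ball
`K = closedBall 0 (3/2)` is still a diffeomorphism onto its image. Since the inverse of `f` is
Lipschitz near `f '' K`, the map `f` expands distances from points of `K` by a factor at least
`c > 0`, and so does its derivative (`exists_expansion_bound`). With `τ < c` this gives injectivity
of `g` and of `Dg`, and the inverse function theorem does the rest
(`isOpen_image_and_smooth_inverse`).
-/

open Metric

open MeasureTheory in
/-- A smooth cutoff at scale `r` around an arbitrary set `Q`, with a dimension-free gradient bound: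
a piecewise linear function of `infDist · Q`, constant near both ends, is mollified at scale `r / 3`.
Averaging preserves the Lipschitz constant `3 / r`. -/
lemma exists_smooth_cutoff {E : Type*} [NormedAddCommGroup E] [InnerProductSpace ℝ E]
    [FiniteDimensional ℝ E] [MeasurableSpace E] [BorelSpace E] (Q : Set E) {r : ℝ} (hr : 0 < r) :
    ∃ φ : E → ℝ, ContDiff ℝ (⊤ : ℕ∞) φ ∧ (∀ x, |φ x| ≤ 1) ∧ (∀ x ∈ Q, φ x = 1) ∧
      (∀ x, r ≤ infDist x Q → φ x = 0) ∧ ∀ x, ‖fderiv ℝ φ x‖ ≤ 3 / r := by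
  set u : E → ℝ := fun x => max (min (2 - 3 / r * infDist x Q) 1) 0 with hu
  have hu0 : ∀ x, 0 ≤ u x := fun x => le_max_right _ _
  have hu1 : ∀ x, u x ≤ 1 := fun x => max_le (min_le_right _ _) zero_le_one
  have hucont : Continuous u := by
    have := continuous_infDist_pt Q
    fun_prop
  have hulip : ∀ x y, |u x - u y| ≤ 3 / r * ‖x - y‖ := by
    intro x y
    have h1 := (lipschitz_infDist_pt Q).dist_le_mul x y
    rw [Real.dist_eq, dist_eq_norm] at h1
    calc |u x - u y| ≤ |min (2 - 3 / r * infDist x Q) 1 - min (2 - 3 / r * infDist y Q) 1| :=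
          abs_max_sub_max_le_abs _ _ _
      _ ≤ |(2 - 3 / r * infDist x Q) - (2 - 3 / r * infDist y Q)| := by
          simpa using abs_min_sub_min_le_max (2 - 3 / r * infDist x Q) 1
            (2 - 3 / r * infDist y Q) 1
      _ = 3 / r * |infDist x Q - infDist y Q| := by
          rw [show (2 - 3 / r * infDist x Q) - (2 - 3 / r * infDist y Q)
            = -(3 / r * (infDist x Q - infDist y Q)) by ring, abs_neg, abs_mul,
            abs_of_pos (by positivity : 0 < 3 / r)]
      _ ≤ 3 / r * ‖x - y‖ := by
          gcongr; simpa using h1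
  have hu_one : ∀ x, infDist x Q ≤ r / 3 → u x = 1 := by
    intro x hx
    have : 3 / r * infDist x Q ≤ 1 := by
      calc 3 / r * infDist x Q ≤ 3 / r * (r / 3) := by gcongr
        _ = 1 := by field_simp
    simp only [hu]
    rw [min_eq_right (by linarith), max_eq_left zero_le_one]
  have hu_zero : ∀ x, 2 * r / 3 ≤ infDist x Q → u x = 0 := by
    intro x hx
    have : 2 ≤ 3 / r * infDist x Q := by
      calc (2 : ℝ) = 3 / r * (2 * r / 3) := by field_simp
        _ ≤ _ := by gcongr
    simp only [hu]
    exact max_eq_right ((min_le_left _ _).trans (by linarith))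
  let ψ : ContDiffBump (0 : E) := ⟨r / 6, r / 3, by positivity, by linarith⟩
  set m : E → ℝ := ψ.normed volume with hm
  have hmc : Continuous m := ψ.continuous_normed
  have hms : HasCompactSupport m := ψ.hasCompactSupport_normed
  have hm0 : ∀ t, 0 ≤ m t := fun t => ψ.nonneg_normed t
  have hm1 : ∫ t, m t = 1 := ψ.integral_normed
  have hmi : Integrable m := hmc.integrable_of_hasCompactSupport hms
  set φ : E → ℝ := convolution m u (ContinuousLinearMap.lsmul ℝ ℝ) volume with hφ
  have hval : ∀ x, φ x = ∫ t, m t * u (x - t) := fun x => by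
    simp [hφ, convolution_def]
  have hint : ∀ x, Integrable (fun t => m t * u (x - t)) := fun x =>
    (by fun_prop : Continuous (fun t => m t * u (x - t))).integrable_of_hasCompactSupport
      hms.mul_right
  have hlip : ∀ x y, ‖φ x - φ y‖ ≤ 3 / r * ‖x - y‖ := by
    intro x y
    rw [hval, hval, ← integral_sub (hint x) (hint y)]
    calc ‖∫ t, (m t * u (x - t) - m t * u (y - t))‖
        ≤ ∫ t, m t * (3 / r * ‖x - y‖) := by
          refine norm_integral_le_of_norm_le (hmi.mul_const _) (Filter.Eventually.of_forall ?_)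
          intro t
          rw [← mul_sub, norm_mul, Real.norm_of_nonneg (hm0 t)]
          refine mul_le_mul_of_nonneg_left ?_ (hm0 t)
          simpa using hulip (x - t) (y - t)
      _ = 3 / r * ‖x - y‖ := by rw [integral_mul_const, hm1, one_mul]
  refine ⟨φ, ?_, ?_, ?_, ?_, ?_⟩
  · exact HasCompactSupport.contDiff_convolution_left _ hms ψ.contDiff_normed
      hucont.locallyIntegrable
  · intro x
    rw [hval, ← Real.norm_eq_abs]
    calc ‖∫ t, m t * u (x - t)‖ ≤ ∫ t, m t := by
          refine norm_integral_le_of_norm_le hmi (Filter.Eventually.of_forall ?_)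
          intro t
          rw [Real.norm_of_nonneg (mul_nonneg (hm0 t) (hu0 _))]
          exact mul_le_of_le_one_right (hm0 t) (hu1 _)
      _ = 1 := hm1
  · intro x hx
    have h1 : u x = 1 := hu_one x (by rw [infDist_zero_of_mem hx]; positivity)
    rw [← h1]
    refine ContDiffBump.normed_convolution_eq_right fun y hy => ?_
    rw [h1]
    refine hu_one y ?_
    have hy' : dist y x < r / 3 := hy
    exact (infDist_le_dist_of_mem hx).trans hy'.le
  · intro x hx
    have h1 : u x = 0 := hu_zero x (by linarith)
    rw [← h1]
    refine ContDiffBump.normed_convolution_eq_right fun y hy => ?_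
    rw [h1]
    refine hu_zero y ?_
    have hy' : dist y x < r / 3 := hy
    have := infDist_le_infDist_add_dist (s := Q) (x := x) (y := y)
    rw [dist_comm] at this
    linarith
  · intro x
    exact norm_fderiv_le_of_lip' ℝ (by positivity)
      (Filter.Eventually.of_forall fun y => hlip y x)

/-- The global form of the inverse function theorem for an injective smooth map whose derivative is
everywhere injective (hence bijective, the dimension being finite). -/
lemma isOpen_image_and_smooth_inverse {E : Type*} [NormedAddCommGroup E] [NormedSpace ℝ E]
    [FiniteDimensional ℝ E] {U : Set E} (hU : IsOpen U) {g : E → E}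
    (hg : ContDiffOn ℝ (⊤ : ℕ∞) g U) (hinj : Set.InjOn g U)
    (hD : ∀ x ∈ U, Function.Injective (fderiv ℝ g x)) :
    IsOpen (g '' U) ∧ ∃ ginv, ContDiffOn ℝ (⊤ : ℕ∞) ginv (g '' U) ∧ ∀ x ∈ U, ginv (g x) = x := by
  have := FiniteDimensional.complete ℝ E
  have hn : ((⊤ : ℕ∞) : WithTop ℕ∞) ≠ 0 := by simp
  have hleft : ∀ x ∈ U, Function.invFunOn g U (g x) = x := fun x hx => hinj.leftInvOn_invFunOn hx
  have key : ∀ x ∈ U, ∃ e : E ≃L[ℝ] E, HasFDerivAt g (e : E →L[ℝ] E) x := by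
    intro x hx
    refine ⟨(LinearEquiv.ofInjectiveEndo (fderiv ℝ g x : E →ₗ[ℝ] E)
      (hD x hx)).toContinuousLinearEquiv, ?_⟩
    convert ((hg.contDiffAt (hU.mem_nhds hx)).differentiableAt hn).hasFDerivAt using 1
    ext v
    rfl
  constructor
  · rw [isOpen_iff_mem_nhds]
    rintro _ ⟨x, hx, rfl⟩
    obtain ⟨e, he⟩ := key x hx
    rw [← ((hg.contDiffAt (hU.mem_nhds hx)).hasStrictFDerivAt' he hn).map_nhds_eq_of_equiv]
    exact Filter.image_mem_map (hU.mem_nhds hx)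
  · refine ⟨Function.invFunOn g U, ?_, hleft⟩
    rintro _ ⟨x, hx, rfl⟩
    obtain ⟨e, he⟩ := key x hx
    have hgx := hg.contDiffAt (hU.mem_nhds hx)
    have hs := hgx.hasStrictFDerivAt' he hn
    refine ContDiffAt.contDiffWithinAt ((hgx.to_localInverse he hn).congr_of_eventuallyEq ?_)
    filter_upwards [hs.eventually_right_inverse, hs.localInverse_tendsto (hU.mem_nhds hx)]
      with y hy hyU
    -- both sides lie in `U` and `g` sends both to `y`
    have := hleft _ hyU
    rwa [hy] at this

/-- A diffeomorphism `f` of `U` onto its image expands distances between points of a compact set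
`K ⊆ U` and points of `U`, uniformly. Points with nearby images are compared through a bound on the
derivative of the inverse near `f '' K`; for the others it suffices that `U` is bounded. -/
lemma exists_expansion_bound {E : Type*} [NormedAddCommGroup E] [NormedSpace ℝ E]
    [FiniteDimensional ℝ E] {U K : Set E} (hU : IsOpen U) (hUb : Bornology.IsBounded U)
    (hK : IsCompact K) (hKU : K ⊆ U) {f finv : E → E} (hf : ContDiffOn ℝ (⊤ : ℕ∞) f U)
    (hfopen : IsOpen (f '' U)) (hinv : ContDiffOn ℝ (⊤ : ℕ∞) finv (f '' U))
    (hleft : ∀ x ∈ U, finv (f x) = x) :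
    ∃ c : ℝ, 0 < c ∧ (∀ x ∈ K, ∀ y ∈ U, c * ‖y - x‖ ≤ ‖f y - f x‖) ∧
      ∀ x ∈ K, ∀ v, c * ‖v‖ ≤ ‖fderiv ℝ f x v‖ := by
  have := FiniteDimensional.proper ℝ E
  have hn : ((⊤ : ℕ∞) : WithTop ℕ∞) ≠ 0 := by simp
  have hfK : IsCompact (f '' K) := hK.image_of_continuousOn (hf.continuousOn.mono hKU)
  obtain ⟨ε, hε, hsub⟩ := hfK.exists_cthickening_subset_open hfopen (Set.image_mono hKU)
  obtain ⟨M', hM'⟩ := hfK.cthickening.exists_bound_of_continuousOn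
    ((hinv.continuousOn_fderiv_of_isOpen hfopen (by simp)).mono hsub)
  obtain ⟨R', hR'⟩ := hUb.exists_norm_le
  set M := max M' 1
  set R := max R' 1
  have hM : ∀ y ∈ cthickening ε (f '' K), ‖fderiv ℝ finv y‖ ≤ M :=
    fun y hy => (hM' y hy).trans (le_max_left _ _)
  have hR : ∀ y ∈ U, ‖y‖ ≤ R := fun y hy => (hR' y hy).trans (le_max_left _ _)
  have hM0 : 0 < M := lt_max_of_lt_right one_pos
  have hR0 : 0 < R := lt_max_of_lt_right one_pos
  have hcont : ∀ x ∈ U, DifferentiableAt ℝ finv (f x) := fun x hx =>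
    (hinv.contDiffAt (hfopen.mem_nhds (Set.mem_image_of_mem f hx))).differentiableAt hn
  -- `1 / M` serves when the images are `ε`-close, `ε / (2 * R)` when they are not.
  refine ⟨min (1 / M) (ε / (2 * R)), by positivity, ?_, ?_⟩
  · intro x hx y hy
    rcases lt_or_ge ‖f y - f x‖ ε with h | h
    · have hb : ball (f x) ε ⊆ cthickening ε (f '' K) :=
        (ball_subset_thickening (Set.mem_image_of_mem f hx) ε).trans
          (thickening_subset_cthickening _ _)
      have h1 := (convex_ball (f x) ε).norm_image_sub_le_of_norm_fderiv_le (𝕜 := ℝ) (f := finv)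
        (fun z hz => (hinv.contDiffAt (hfopen.mem_nhds (hsub (hb hz)))).differentiableAt hn)
        (fun z hz => hM z (hb hz)) (mem_ball_self hε) (by rwa [mem_ball, dist_eq_norm])
      rw [hleft y hy, hleft x (hKU hx)] at h1
      calc min (1 / M) (ε / (2 * R)) * ‖y - x‖ ≤ 1 / M * (M * ‖f y - f x‖) := by
            gcongr; exact min_le_left _ _
        _ = ‖f y - f x‖ := by field_simp
    · calc min (1 / M) (ε / (2 * R)) * ‖y - x‖ ≤ ε / (2 * R) * (2 * R) := by
            gcongr
            · exact min_le_right _ _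
            · linarith [norm_sub_le y x, hR y hy, hR x (hKU hx)]
        _ = ε := by field_simp
        _ ≤ _ := h
  · intro x hx v
    have hxU := hKU hx
    have hdf : DifferentiableAt ℝ f x := (hf.contDiffAt (hU.mem_nhds hxU)).differentiableAt hn
    have hcomp : HasFDerivAt (finv ∘ f) ((fderiv ℝ finv (f x)).comp (fderiv ℝ f x)) x :=
      (hcont x hxU).hasFDerivAt.comp x hdf.hasFDerivAt
    have hid : HasFDerivAt (finv ∘ f) (ContinuousLinearMap.id ℝ E) x :=
      (hasFDerivAt_id x).congr_of_eventuallyEq (by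
        filter_upwards [hU.mem_nhds hxU] with y hy using hleft y hy)
    have hv : fderiv ℝ finv (f x) (fderiv ℝ f x v) = v := by
      simpa using DFunLike.congr_fun (hcomp.unique hid) v
    have h1 : ‖v‖ ≤ M * ‖fderiv ℝ f x v‖ := by
      calc ‖v‖ = ‖fderiv ℝ finv (f x) (fderiv ℝ f x v)‖ := by rw [hv]
        _ ≤ ‖fderiv ℝ finv (f x)‖ * ‖fderiv ℝ f x v‖ := ContinuousLinearMap.le_opNorm _ _
        _ ≤ _ := by
          gcongr
          exact hM _ (self_subset_cthickening _ (Set.mem_image_of_mem f hx))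
    calc min (1 / M) (ε / (2 * R)) * ‖v‖ ≤ 1 / M * (M * ‖fderiv ℝ f x v‖) := by
          gcongr; exact min_le_left _ _
      _ = _ := by field_simp

/-- **Corollary of the local linearization lemma.**  Given a `C^∞` diffeomorphism onto its
image `f : B(0,2) → ℝ^d` and `θ, χ′ > 0`, there are `ρ, η > 0` such that: for every compact
`Q ⊆ B(0,1)` homeomorphic to the closed unit ball with `0 < diam Q < ρ`, and every invertible
linear map `A` with `‖A − Df(x₀)‖ < η` for some `x₀ ∈ Q`, there is a `C^∞` diffeomorphism
onto its image `g : B(0,2) → ℝ^d` coinciding with `f` at distance `≥ χ′·diam Q` from `Q`,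
equal to the affine map `z ↦ A z + b` on `Q`, with `‖Dg − Df‖ ≤ θ` on `B(0,2)`. -/
theorem local_linearization_to_affine_map
    (d : ℕ) (hd : 1 ≤ d)
    (f : EuclideanSpace ℝ (Fin d) → EuclideanSpace ℝ (Fin d))
    (hf : ContDiffOn ℝ (⊤ : ℕ∞) f (ball (0 : EuclideanSpace ℝ (Fin d)) 2))
    (hfinj : Set.InjOn f (ball (0 : EuclideanSpace ℝ (Fin d)) 2))
    (hfopen : IsOpen (f '' ball (0 : EuclideanSpace ℝ (Fin d)) 2))
    (hfinv : ∃ finv, ContDiffOn ℝ (⊤ : ℕ∞) finv (f '' ball (0 : EuclideanSpace ℝ (Fin d)) 2) ∧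
      ∀ x ∈ ball (0 : EuclideanSpace ℝ (Fin d)) 2, finv (f x) = x)
    (θ χ' : ℝ) (hθ : 0 < θ) (hχ' : 0 < χ') :
    ∃ ρ η : ℝ, 0 < ρ ∧ 0 < η ∧
      ∀ Q : Set (EuclideanSpace ℝ (Fin d)),
        IsCompact Q → Q ⊆ ball (0 : EuclideanSpace ℝ (Fin d)) 1 →
        Nonempty (Q ≃ₜ (closedBall (0 : EuclideanSpace ℝ (Fin d)) 1 :
          Set (EuclideanSpace ℝ (Fin d)))) →
        0 < Metric.diam Q → Metric.diam Q < ρ →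
        ∀ A : EuclideanSpace ℝ (Fin d) →L[ℝ] EuclideanSpace ℝ (Fin d),
          Function.Bijective A →
          ∀ x₀ ∈ Q, ‖A - fderiv ℝ f x₀‖ < η →
          ∃ b : EuclideanSpace ℝ (Fin d),
          ∃ g : EuclideanSpace ℝ (Fin d) → EuclideanSpace ℝ (Fin d),
            ContDiffOn ℝ (⊤ : ℕ∞) g (ball (0 : EuclideanSpace ℝ (Fin d)) 2) ∧
            Set.InjOn g (ball (0 : EuclideanSpace ℝ (Fin d)) 2) ∧
            IsOpen (g '' ball (0 : EuclideanSpace ℝ (Fin d)) 2) ∧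
            (∃ ginv, ContDiffOn ℝ (⊤ : ℕ∞) ginv (g '' ball (0 : EuclideanSpace ℝ (Fin d)) 2) ∧
              ∀ x ∈ ball (0 : EuclideanSpace ℝ (Fin d)) 2, ginv (g x) = x) ∧
            (∀ x ∈ ball (0 : EuclideanSpace ℝ (Fin d)) 2,
              χ' * Metric.diam Q ≤ infDist x Q → g x = f x) ∧
            (∀ z ∈ Q, g z = A z + b) ∧
            (∀ x ∈ ball (0 : EuclideanSpace ℝ (Fin d)) 2,
              ‖fderiv ℝ g x - fderiv ℝ f x‖ ≤ θ) := by
  obtain ⟨finv, hfinv, hleft⟩ := hfinv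
  set U := ball (0 : EuclideanSpace ℝ (Fin d)) 2
  set K := closedBall (0 : EuclideanSpace ℝ (Fin d)) (3 / 2)
  have hn : ((⊤ : ℕ∞) : WithTop ℕ∞) ≠ 0 := by simp
  have hU : IsOpen U := isOpen_ball
  have hK : IsCompact K := isCompact_closedBall _ _
  have hKU : K ⊆ U := closedBall_subset_ball (by norm_num)
  obtain ⟨c, hc, hexp, hexpD⟩ :=
    exists_expansion_bound hU isBounded_ball hK hKU hf hfopen hfinv hleft
  have hfd : ∀ x ∈ U, DifferentiableAt ℝ f x := fun x hx =>
    (hf.contDiffAt (hU.mem_nhds hx)).differentiableAt hn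
  have hfcont : ContinuousOn (fderiv ℝ f) U := hf.continuousOn_fderiv_of_isOpen hU (by simp)
  -- every point of `U` has an invertible derivative: apply the expansion bound to `{x}`
  have hDf : ∀ x ∈ U, Function.Injective (fderiv ℝ f x) := by
    intro x hx
    obtain ⟨c', hc', -, h⟩ := exists_expansion_bound hU isBounded_ball
      (isCompact_singleton (x := x)) (by simpa using hx) hf hfopen hfinv hleft
    rw [injective_iff_map_eq_zero]
    intro v hv
    have h1 := h x rfl v
    rw [hv, norm_zero] at h1
    exact norm_le_zero_iff.mp (nonpos_of_mul_nonpos_right h1 hc')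
  set χ := min χ' 1
  have hχ : 0 < χ := lt_min hχ' one_pos
  have hχ1 : χ ≤ 1 := min_le_right _ _
  set τ := min θ (c / 2)
  have hτ : 0 < τ := lt_min hθ (by positivity)
  have hτc : τ < c := (min_le_right _ _).trans_lt (by linarith)
  set ε := τ / (2 * (1 + 6 / χ)) with hε_def
  have hε : 0 < ε := by positivity
  obtain ⟨ρ₀, hρ₀, hunif⟩ := Metric.uniformContinuousOn_iff.mp
    (hK.uniformContinuousOn_of_continuous (hfcont.mono hKU)) ε hε
  refine ⟨min (ρ₀ / 2) (1 / 4), ε, by positivity, hε, ?_⟩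
  intro Q hQ hQ1 _ hδ hδρ A _ x₀ hx₀ hA
  set δ := Metric.diam Q
  have hδ1 : 2 * δ < ρ₀ := by linarith [min_le_left (ρ₀ / 2) (1 / 4)]
  have hδ2 : δ < 1 / 4 := by linarith [min_le_right (ρ₀ / 2) (1 / 4)]
  have hr : 0 < χ * δ := by positivity
  obtain ⟨φ, hφ, hφ1, hφQ, hφ0, hφD⟩ := exists_smooth_cutoff Q hr
  -- the closed `χ δ`-neighbourhood of `Q`, which contains the support of `φ`, is in this ball
  set B := closedBall x₀ (2 * δ)
  have hBK : B ⊆ K := by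
    intro x hx
    have h1 : dist x x₀ ≤ 2 * δ := hx
    have h2 : dist x₀ 0 < 1 := hQ1 hx₀
    have h3 := dist_triangle x x₀ 0
    change dist x 0 ≤ 3 / 2
    linarith
  have hnear : ∀ x, infDist x Q ≤ χ * δ → x ∈ B := by
    intro x hx
    obtain ⟨q, hq, hqd⟩ := hQ.exists_infDist_eq_dist ⟨x₀, hx₀⟩ x
    have h1 : dist q x₀ ≤ δ := dist_le_diam_of_mem hQ.isBounded hq hx₀
    have h2 : χ * δ ≤ δ := mul_le_of_le_one_left hδ.le hχ1
    have h3 := dist_triangle x q x₀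
    change dist x x₀ ≤ 2 * δ
    linarith
  set b := f x₀ - A x₀ with hb
  set h : EuclideanSpace ℝ (Fin d) → EuclideanSpace ℝ (Fin d) := fun z => A z + b - f z with hh
  have hhD : ∀ x ∈ U, HasFDerivAt h (A - fderiv ℝ f x) x := fun x hx =>
    (A.hasFDerivAt.add_const b).sub (hfd x hx).hasFDerivAt
  have hx₀B : x₀ ∈ B := mem_closedBall_self (by positivity)
  have hDh : ∀ x ∈ B, ‖A - fderiv ℝ f x‖ ≤ 2 * ε := by
    intro x hx
    have h1 := hunif x₀ (hBK hx₀B) x (hBK hx) (by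
      rw [dist_comm]; exact (mem_closedBall.mp hx).trans_lt hδ1)
    rw [dist_eq_norm] at h1
    have h2 := norm_add_le (A - fderiv ℝ f x₀) (fderiv ℝ f x₀ - fderiv ℝ f x)
    rw [sub_add_sub_cancel] at h2
    linarith
  have hhB : ∀ x ∈ B, ‖h x‖ ≤ 2 * ε * (2 * δ) := by
    intro x hx
    have h1 := (convex_closedBall x₀ (2 * δ)).norm_image_sub_le_of_norm_hasFDerivWithin_le
      (𝕜 := ℝ) (fun z hz => (hhD z (hKU (hBK hz))).hasFDerivWithinAt) hDh hx₀B hx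
    have h0 : h x₀ = 0 := by simp [hh, hb]
    rw [h0, sub_zero] at h1
    refine h1.trans ?_
    gcongr
    rw [← dist_eq_norm]
    exact hx
  set g : EuclideanSpace ℝ (Fin d) → EuclideanSpace ℝ (Fin d) :=
    fun z => f z + φ z • h z with hg_def
  have hg : ContDiffOn ℝ (⊤ : ℕ∞) g U :=
    hf.add (hφ.contDiffOn.smul ((A.contDiff.contDiffOn.add contDiffOn_const).sub hf))
  have hgd : ∀ x ∈ U, DifferentiableAt ℝ g x := fun x hx =>
    (hg.contDiffAt (hU.mem_nhds hx)).differentiableAt hn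
  have hgf : ∀ x, χ * δ ≤ infDist x Q → g x = f x := fun x hx => by
    simp [hg_def, hφ0 x hx]
  have hgf' : ∀ x, χ * δ < infDist x Q → fderiv ℝ g x = fderiv ℝ f x := by
    intro x hx
    refine Filter.EventuallyEq.fderiv_eq ?_
    filter_upwards [(isOpen_lt continuous_const (continuous_infDist_pt Q)).mem_nhds hx] with y hy
    exact hgf y (le_of_lt hy)
  have hDg : ∀ x ∈ U, ‖fderiv ℝ g x - fderiv ℝ f x‖ ≤ τ := by
    intro x hx
    rcases lt_or_ge (χ * δ) (infDist x Q) with hfar | hclose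
    · rw [hgf' x hfar, sub_self, norm_zero]
      exact hτ.le
    · have hxB := hnear x hclose
      have hφx : HasFDerivAt φ (fderiv ℝ φ x) x :=
        (hφ.contDiffAt.differentiableAt hn).hasFDerivAt
      have hgx := ((hfd x hx).hasFDerivAt.add (hφx.smul (hhD x hx))).fderiv
      have hgx' : fderiv ℝ g x - fderiv ℝ f x
          = φ x • (A - fderiv ℝ f x) + (fderiv ℝ φ x).smulRight (h x) := by
        rw [sub_eq_iff_eq_add']
        exact hgx
      rw [hgx']
      calc _ ≤ ‖φ x • (A - fderiv ℝ f x)‖ + ‖(fderiv ℝ φ x).smulRight (h x)‖ := norm_add_le _ _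
        _ = |φ x| * ‖A - fderiv ℝ f x‖ + ‖fderiv ℝ φ x‖ * ‖h x‖ := by
          rw [norm_smul, ContinuousLinearMap.norm_smulRight_apply, Real.norm_eq_abs]
        _ ≤ 1 * (2 * ε) + 3 / (χ * δ) * (2 * ε * (2 * δ)) := by
          gcongr
          · exact hφ1 x
          · exact hDh x hxB
          · exact hφD x
          · exact hhB x hxB
        _ = τ := by
          rw [hε_def]; field_simp; ring
  have hLip : ∀ x ∈ U, ∀ y ∈ U, ‖(g y - f y) - (g x - f x)‖ ≤ τ * ‖y - x‖ := fun x hx y hy =>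
    (convex_ball (0 : EuclideanSpace ℝ (Fin d)) 2).norm_image_sub_le_of_norm_hasFDerivWithin_le
      (𝕜 := ℝ) (f := fun z => g z - f z)
      (fun z hz => ((hgd z hz).hasFDerivAt.sub (hfd z hz).hasFDerivAt).hasFDerivWithinAt)
      hDg hx hy
  have hinjK : ∀ x ∈ K, ∀ y ∈ U, g x = g y → x = y := by
    intro x hx y hy hxy
    have h1 := hexp x hx y hy
    have h2 := hLip x (hKU hx) y hy
    rw [hxy, sub_sub_sub_cancel_left, norm_sub_rev] at h2
    have h3 : (c - τ) * ‖y - x‖ ≤ 0 := by linarith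
    have h4 : ‖y - x‖ ≤ 0 := nonpos_of_mul_nonpos_right h3 (by linarith)
    exact (sub_eq_zero.mp (norm_le_zero_iff.mp h4)).symm
  have hinj : Set.InjOn g U := by
    intro x hx y hy hxy
    rcases lt_or_ge (χ * δ) (infDist x Q) with hxf | hxc
    · rcases lt_or_ge (χ * δ) (infDist y Q) with hyf | hyc
      · exact hfinj hx hy (by rw [← hgf x hxf.le, ← hgf y hyf.le, hxy])
      · exact (hinjK y (hBK (hnear y hyc)) x hx hxy.symm).symm
    · exact hinjK x (hBK (hnear x hxc)) y hy hxy
  have hDinj : ∀ x ∈ U, Function.Injective (fderiv ℝ g x) := by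
    intro x hx
    rcases lt_or_ge (χ * δ) (infDist x Q) with hxf | hxc
    · rw [hgf' x hxf]
      exact hDf x hx
    · rw [injective_iff_map_eq_zero]
      intro v hv
      have h1 := hexpD x (hBK (hnear x hxc)) v
      have h2 := (fderiv ℝ g x - fderiv ℝ f x).le_of_opNorm_le (hDg x hx) v
      rw [sub_apply, hv, zero_sub, norm_neg] at h2
      have h3 : (c - τ) * ‖v‖ ≤ 0 := by linarith
      exact norm_le_zero_iff.mp (nonpos_of_mul_nonpos_right h3 (by linarith))
  obtain ⟨hopen, hginv⟩ := isOpen_image_and_smooth_inverse hU hg hinj hDinj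
  refine ⟨b, g, hg, hinj, hopen, hginv, ?_, ?_, fun x hx => (hDg x hx).trans (min_le_left _ _)⟩
  · intro x _ hx
    refine hgf x (le_trans ?_ hx)
    gcongr
    exact min_le_left _ _
  · intro z hz
    simp [hg_def, hφQ z hz, hh]
end

section
/- Fix an integer d ≥ 1 and let B = [−1/2, 1/2]^d ⊂ ℝ^d. Let L ∈ GL(d,ℝ) with operator norm ‖L‖ < 1, set J = |det L|, let H ≥ 1 be an integer, and let v₀, v₁, …, v_H ∈ B be such that each affine map L_j(z) = L·z + v_j (0 ≤ j ≤ H) sends B into the interior of B; for a word j̲ = (j₁, …, j_n) ∈ {1,…,H}^n write L_{j̲} = L_{j_n} ∘ ⋯ ∘ L_{j₁}. Assume there exist β > 1 and c ∈ (0,1) such that β^{2−c} < (J·H)² and, for every n ≥ 1 and every x ∈ ℝ^d, the number of words j̲ ∈ {1,…,H}^n with x ∈ L_{j̲}(B) is at most β^n. Then there is n₀ such that for every n ≥ n₀ the following holds, with m = ⌊c·n⌋ + 1: there exists a function w : {1,…,H}^n → B satisfying w_{j̲} = w_{j̲′} whenever the last m letters (j_{n−m+1}, …, j_n) of j̲ and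 j̲′ coincide, such that the family of affine contractions G_{j̲}(z) = L₀(L_{j̲}(z)) + 10·L^{n+1}(w_{j̲}), j̲ ∈ {1,…,H}^n, satisfies the recurrent compact condition: there is a nonempty compact set K ⊆ ⋃_{j̲} G_{j̲}(B) such that for every z ∈ K there exist z′ in the interior of K and a word j̲ with G_{j̲}(z′) = z. -/
/-!
The proof is a first-moment argument. Write `B` for the cube and call the sets `L_j(B)`, `j` a word of
length `n`, the pieces. Their volumes add up to `(J H)^n` and at most `β^n` of them overlap, so the
set `A` of points lying in at least `T ≈ (J H)^n` pieces has volume at least of order `(J H / β)^n`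
(`measure_multSet_ge`). The recurrent compact set is `K = L₀(A)`.

Fix `z = L₀(x)` in `K`. At most `β^(n-m)` pieces through `x` share a given suffix of length `m`
(`card_words_suffix_le`), so the pieces through `x` have at least `T / β^(n-m)` distinct suffixes.
If the parameter of a suffix is uniform in `B`, the preimage `G_j^{-1}(z) = y - 10 w`, where `y ∈ B`,
is uniform in a cube containing `B`, hence lies in a set of volume comparable to that of `K` with
probability of order `(J H / β)^n`. As the parameters of different suffixes are independent, `z`
fails with probability at most `exp (-c₀ θ^n)`, where `θ = (J H)^2 / β^(2-c) > 1`.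

To treat all `z ∈ K` at once, a net of `K` of exponentially small mesh suffices, which has only
exponentially many points (`exists_net`); the union bound is `exists_selection` and the comparison
of rates `eventually_numeric`. The passage from the net to `K` uses a margin: preimages of net points
are required to lie in `L₀(U)`, where `U` is defined like `A` but with pieces `L_j(B/2)`, so that
`U + L^n(ball 0 (1/4)) ⊆ A` (`half_cube_add`).
-/

open MeasureTheory

/-- The closed cube `[−1/2,1/2]^d` in `ℝ^d`. -/
def unitCube (d : ℕ) : Set (EuclideanSpace ℝ (Fin d)) :=
  {x | ∀ i, |x i| ≤ 1 / 2}

/-- `wordMap L v n w` is the composition `L_{w n} ∘ ⋯ ∘ L_{w 1}` of the affine contractions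
`L_j z = L z + v j` along the word `w = (w 1, …, w n)` (first letter applied first). -/
noncomputable def wordMap {d H : ℕ}
    (L : EuclideanSpace ℝ (Fin d) →L[ℝ] EuclideanSpace ℝ (Fin d))
    (v : Fin H → EuclideanSpace ℝ (Fin d)) :
    (n : ℕ) → (Fin n → Fin H) → EuclideanSpace ℝ (Fin d) → EuclideanSpace ℝ (Fin d)
  | 0, _, z => z
  | n + 1, w, z => L (wordMap L v n (fun i => w i.castSucc) z) + v (w (Fin.last n))

section Helpers

open Set
open scoped Pointwise

variable {d H : ℕ}

/-! ### Word maps and the unit cube -/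

lemma wordMap_affine (L : EuclideanSpace ℝ (Fin d) →L[ℝ] EuclideanSpace ℝ (Fin d))
    (v : Fin H → EuclideanSpace ℝ (Fin d)) (n : ℕ) (j : Fin n → Fin H)
    (z : EuclideanSpace ℝ (Fin d)) :
    wordMap L v n j z = (L ^ n) z + wordMap L v n j 0 := by
  induction n with
  | zero => simp [wordMap]
  | succ n ih =>
    rw [wordMap, wordMap, ih, pow_succ']
    simp [add_assoc]

lemma wordMap_mem_unitCube (L : EuclideanSpace ℝ (Fin d) →L[ℝ] EuclideanSpace ℝ (Fin d))
    (v : Fin H → EuclideanSpace ℝ (Fin d))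
    (hmap : ∀ j : Fin H, ∀ z ∈ unitCube d, L z + v j ∈ interior (unitCube d))
    (n : ℕ) (j : Fin n → Fin H) {z : EuclideanSpace ℝ (Fin d)} (hz : z ∈ unitCube d) :
    wordMap L v n j z ∈ unitCube d := by
  induction n with
  | zero => simpa [wordMap]
  | succ n ih => exact interior_subset (hmap _ _ (ih _))

lemma unitCube_eq_preimage (d : ℕ) :
    unitCube d = WithLp.ofLp ⁻¹' (Set.pi univ fun _ : Fin d => Icc (-(1 / 2 : ℝ)) (1 / 2)) := by
  ext x
  simp only [unitCube, mem_ofPred_eq, mem_preimage, mem_pi, mem_univ, forall_const, mem_Icc, abs_le]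

lemma isClosed_unitCube (d : ℕ) : IsClosed (unitCube d) := by
  rw [unitCube_eq_preimage]
  exact (isClosed_set_pi fun _ _ => isClosed_Icc).preimage (PiLp.continuous_ofLp 2 _)

lemma volume_unitCube (d : ℕ) : volume (unitCube d) = 1 := by
  rw [unitCube_eq_preimage, (PiLp.volume_preserving_ofLp (Fin d)).measure_preimage
    (MeasurableSet.univ_pi fun _ => measurableSet_Icc).nullMeasurableSet]
  rw [volume_pi_pi]
  norm_num

lemma isCompact_unitCube (d : ℕ) : IsCompact (unitCube d) := by
  rw [unitCube_eq_preimage]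
  exact (PiLp.homeomorph 2 (fun _ : Fin d => ℝ)).isCompact_preimage.2
    (isCompact_univ_pi fun _ => isCompact_Icc)

/-! ### Highly covered points -/

/-- Points lying in at least `T` of the sets `f j`. -/
def multSet {ι X : Type*} (f : ι → Set X) (T : ℝ) : Set X :=
  {x | ∃ F : Finset ι, T ≤ F.card ∧ ∀ j ∈ F, x ∈ f j}

lemma isClosed_multSet {ι X : Type*} [Finite ι] [TopologicalSpace X] {f : ι → Set X} (T : ℝ)
    (hf : ∀ j, IsClosed (f j)) : IsClosed (multSet f T) := by
  have : multSet f T = ⋃ F ∈ {F : Finset ι | T ≤ F.card}, ⋂ j ∈ F, f j := by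
    ext x; simp [multSet]
  rw [this]
  exact (Set.toFinite _).isClosed_biUnion fun F _ => isClosed_biInter fun j _ => hf j

/-- If the `f j` have measure at least `a`, lie in a set of measure one, and overlap at most `M`
times, then the points lying in at least `T` of them have measure at least `T / M`, for any `T` up
to half the average `a |ι|`: the integral of the counting function is at most
`T + M μ (multSet f T)`. -/
lemma measure_multSet_ge {ι X : Type*} [Fintype ι] [MeasurableSpace X] (μ : Measure X)
    {f : ι → Set X} {T a M : ℝ} (hT0 : 0 ≤ T) (hM : 0 < M)
    {B : Set X} (hB : MeasurableSet B) (hB1 : μ B = 1)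
    (hf : ∀ j, MeasurableSet (f j)) (hfB : ∀ j, f j ⊆ B) (ha : ∀ j, a ≤ μ.real (f j))
    (hmult : ∀ x, ∀ F : Finset ι, (∀ j ∈ F, x ∈ f j) → (F.card : ℝ) ≤ M)
    (hT : 2 * T ≤ a * Fintype.card ι) (hmeas : MeasurableSet (multSet f T)) :
    T / M ≤ μ.real (multSet f T) := by
  classical
  have hfin : ∀ s, s ⊆ B → μ s ≠ ⊤ := fun s hs =>
    ((measure_mono hs).trans_lt (by simp [hB1])).ne
  have h_integrable : ∀ s, MeasurableSet s → s ⊆ B → Integrable (s.indicator fun _ => (1:ℝ)) μ :=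
    fun s hs hsB => (integrable_indicator_iff hs).2 (integrableOn_const (hfin s hsB))
  set U := multSet f T ∩ B with hU
  have hUm : MeasurableSet U := hmeas.inter hB
  have h1 : ∑ j, μ.real (f j) = ∫ x, ∑ j, (f j).indicator (fun _ => (1:ℝ)) x ∂μ := by
    rw [integral_finsetSum _ fun j _ => h_integrable _ (hf j) (hfB j)]
    simp [integral_indicator, hf]
  have h2 : ∫ x, ∑ j, (f j).indicator (fun _ => (1:ℝ)) x ∂μ ≤
      ∫ x, (T * B.indicator (fun _ => (1:ℝ)) x + M * U.indicator (fun _ => (1:ℝ)) x) ∂μ := by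
    apply integral_mono
    · exact integrable_finsetSum _ fun j _ => h_integrable _ (hf j) (hfB j)
    · exact ((h_integrable B hB subset_rfl).const_mul T).add
        ((h_integrable U hUm inter_subset_right).const_mul M)
    intro x
    have hs : ∑ j, (f j).indicator (fun _ => (1:ℝ)) x
        = ((Finset.univ.filter fun j => x ∈ f j).card : ℝ) := by
      simp [Set.indicator_apply, Finset.sum_boole]
    simp only [hs]
    by_cases hxB : x ∈ B
    · by_cases hx : x ∈ multSet f T
      · have := hmult x (Finset.univ.filter fun j => x ∈ f j) (by simp)
        simp [hxB, hU, hx]; linarith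
      · have : ((Finset.univ.filter fun j => x ∈ f j).card : ℝ) < T := by
          by_contra! h
          exact hx ⟨_, h, by simp⟩
        simp [hxB, hU, hx]; linarith
    · have : (Finset.univ.filter fun j => x ∈ f j) = ∅ := by
        ext j; simp; exact fun h => hxB (hfB j h)
      simp [this, hU, hxB]
  have h3 : ∫ x, (T * B.indicator (fun _ => (1:ℝ)) x + M * U.indicator (fun _ => (1:ℝ)) x) ∂μ
      = T + M * μ.real U := by
    rw [integral_add ((h_integrable B hB subset_rfl).const_mul T)
        ((h_integrable U hUm inter_subset_right).const_mul M), integral_const_mul, integral_const_mul]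
    simp [integral_indicator, hB, hUm, measureReal_def, hB1]
  have h4 : a * Fintype.card ι ≤ ∑ j, μ.real (f j) := by
    have := Finset.sum_le_sum fun j (_ : j ∈ Finset.univ) => ha j
    simpa [mul_comm] using this
  by_cases hT00 : T = 0
  · simp [hT00]
  have hUB : multSet f T = U := by
    refine (inter_eq_left.2 ?_).symm
    rintro x ⟨F, hF, hx⟩
    have : F.Nonempty := by
      rw [← Finset.card_pos]
      have : 0 < T := lt_of_le_of_ne hT0 (Ne.symm hT00)
      exact_mod_cast this.trans_le hF
    obtain ⟨j, hj⟩ := this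
    exact hfB j (hx j hj)
  rw [hUB, div_le_iff₀ hM]
  linarith

/-! ### Random selection -/

/-- Independent draws `w s` from `μ`: for each `z` the probability that every `s ∈ sub z` misses its
good set is at most `(1 - p) ^ |sub z| ≤ exp (-Q)`, so a union bound over `Z` leaves a draw that
works for all `z`. -/
lemma exists_selection {Ω S ζ : Type*} [MeasurableSpace Ω] (μ : Measure Ω)
    [IsProbabilityMeasure μ] [Fintype S] (Z : Finset ζ) (sub : ζ → Finset S)
    (good : ζ → S → Set Ω) (p Q : ℝ)
    (hmeas : ∀ z ∈ Z, ∀ s ∈ sub z, MeasurableSet (good z s))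
    (hgood : ∀ z ∈ Z, ∀ s ∈ sub z, p ≤ μ.real (good z s))
    (hQ : ∀ z ∈ Z, Q ≤ p * (sub z).card) (hZ : Z.card * Real.exp (-Q) < 1) :
    ∃ w : S → Ω, ∀ z ∈ Z, ∃ s ∈ sub z, w s ∈ good z s := by
  classical
  set P : Measure (S → Ω) := Measure.pi fun _ => μ with hP
  let bad : ζ → Set (S → Ω) := fun z =>
    Set.pi univ fun s => if s ∈ sub z then (good z s)ᶜ else univ
  have hbad : ∀ z ∈ Z, P.real (bad z) ≤ Real.exp (-Q) := by
    intro z hz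
    rw [measureReal_def, hP, Measure.pi_pi, ENNReal.toReal_prod]
    calc ∏ s, (μ (if s ∈ sub z then (good z s)ᶜ else univ)).toReal
        ≤ ∏ s, (if s ∈ sub z then Real.exp (-p) else 1) := by
          refine Finset.prod_le_prod (fun _ _ => ENNReal.toReal_nonneg) fun s _ => ?_
          split_ifs with hs
          · rw [← measureReal_def, probReal_compl_eq_one_sub (hmeas z hz s hs)]
            have := hgood z hz s hs
            have := Real.one_sub_le_exp_neg p
            linarith
          · simp
      _ = Real.exp (-p * (sub z).card) := by
          rw [Finset.prod_ite_mem]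
          simp [← Real.exp_nat_mul, mul_comm]
      _ ≤ Real.exp (-Q) := by
          apply Real.exp_le_exp.2
          have := hQ z hz
          linarith
  have hun : P.real (⋃ z ∈ Z, bad z) < 1 := by
    calc P.real (⋃ z ∈ Z, bad z) ≤ ∑ z ∈ Z, P.real (bad z) := measureReal_biUnion_finset_le _ _
      _ ≤ ∑ z ∈ Z, Real.exp (-Q) := Finset.sum_le_sum hbad
      _ < 1 := by simpa using hZ
  have hne : (⋃ z ∈ Z, bad z) ≠ univ := by
    intro h
    rw [h] at hun
    simp at hun
  obtain ⟨w, hw⟩ := (ne_univ_iff_exists_notMem _).1 hne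
  refine ⟨w, fun z hz => ?_⟩
  by_contra! h
  apply hw
  refine mem_biUnion hz fun s _ => ?_
  dsimp only
  split_ifs with hs
  · exact h s hs
  · trivial

/-! ### Counting words with a prescribed suffix -/

/-- At most `β ^ k` pieces of length `n` with a prescribed suffix of length `n - k` pass through `x`:
stripping the suffix pulls `x` back to one point, to which the bound for length `k` applies. -/
lemma card_words_suffix_le {L : EuclideanSpace ℝ (Fin d) →L[ℝ] EuclideanSpace ℝ (Fin d)}
    (hL : Function.Injective L) (v : Fin H → EuclideanSpace ℝ (Fin d)) {β : ℝ}
    (hcount : ∀ n : ℕ, 1 ≤ n → ∀ x : EuclideanSpace ℝ (Fin d),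
      (Nat.card {w : Fin n → Fin H // x ∈ wordMap L v n w '' unitCube d} : ℝ) ≤ β ^ n)
    {k n : ℕ} (hkn : k ≤ n) (s : Fin n → Fin H) (x : EuclideanSpace ℝ (Fin d))
    (F : Finset (Fin n → Fin H))
    (hF : ∀ j ∈ F, x ∈ wordMap L v n j '' unitCube d)
    (hs : ∀ j ∈ F, ∀ i : Fin n, k ≤ (i : ℕ) → j i = s i) : (F.card : ℝ) ≤ β ^ k := by
  classical
  induction n, hkn using Nat.le_induction generalizing x with
  | base =>
    rcases Nat.eq_zero_or_pos k with rfl | hk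
    · have : F.card ≤ 1 := (Finset.card_le_univ F).trans (by simp)
      simpa using this
    · refine le_trans ?_ (hcount k hk x)
      have : F.card ≤ Nat.card {w : Fin k → Fin H // x ∈ wordMap L v k w '' unitCube d} := by
        rw [Nat.card_eq_fintype_card, Fintype.card_subtype]
        exact Finset.card_le_card fun j hj => by simpa using hF j hj
      exact_mod_cast this
  | succ n hkn ih =>
    rcases F.eq_empty_or_nonempty with rfl | ⟨j₀, hj₀⟩
    · have := ih (fun i => s i.castSucc) x ∅ (by simp) (by simp)
      simpa using this
    have hlast : ∀ j ∈ F, j (Fin.last n) = s (Fin.last n) := fun j hj =>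
      hs j hj _ (by simpa using hkn)
    obtain ⟨z₀, hz₀, hx₀⟩ := hF j₀ hj₀
    set x' := wordMap L v n (fun i => j₀ i.castSucc) z₀ with hx'
    have key : ∀ j ∈ F, x' ∈ wordMap L v n (fun i => j i.castSucc) '' unitCube d := by
      intro j hj
      obtain ⟨z, hz, hx⟩ := hF j hj
      refine ⟨z, hz, hL ?_⟩
      rw [wordMap, hlast j hj] at hx
      rw [wordMap, hlast j₀ hj₀] at hx₀
      exact add_right_cancel (hx.trans hx₀.symm)
    have := ih (fun i => s i.castSucc) x' (F.image fun j i => j i.castSucc)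
      (by simpa using key)
      (by
        simp only [Finset.mem_image, forall_exists_index, and_imp, forall_apply_eq_imp_iff₂]
        exact fun j hj i hi => hs j hj _ (by simpa using hi))
    rwa [Finset.card_image_of_injOn] at this
    intro j hj j' hj' h
    funext i
    refine Fin.lastCases ?_ (fun i => ?_) i
    · rw [hlast j hj, hlast j' hj']
    · exact congrFun h i

/-! ### Volumes, preimages and nets -/

lemma volume_image_affine (M : EuclideanSpace ℝ (Fin d) →L[ℝ] EuclideanSpace ℝ (Fin d))
    (a : EuclideanSpace ℝ (Fin d)) (S : Set (EuclideanSpace ℝ (Fin d))) :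
    volume.real ((fun z => M z + a) '' S) = |LinearMap.det M.toLinearMap| * volume.real S := by
  have : (fun z => M z + a) '' S = (fun z => z + a) '' (M '' S) := by rw [image_image]
  rw [this, measureReal_def, image_add_right, measure_preimage_add_right,
    Measure.addHaar_image_continuousLinearMap, ENNReal.toReal_mul,
    ENNReal.toReal_ofReal (abs_nonneg _), measureReal_def]

lemma volume_preimage_sub_smul (y : EuclideanSpace ℝ (Fin d))
    {S : Set (EuclideanSpace ℝ (Fin d))} (hS : MeasurableSet S) :
    volume.real {w | y - (10 : ℝ) • w ∈ S} = ((10 : ℝ) ^ d)⁻¹ * volume.real S := by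
  have : {w : EuclideanSpace ℝ (Fin d) | y - (10 : ℝ) • w ∈ S}
      = ((10 : ℝ) • ·) ⁻¹' ((fun x => y - x) ⁻¹' S) := rfl
  have hy : volume ((fun x => y - x) ⁻¹' S) = volume S :=
    (Measure.measurePreserving_sub_left volume y).measure_preimage hS.nullMeasurableSet
  rw [this, measureReal_def, Measure.addHaar_preimage_smul _ (by norm_num), hy,
    ENNReal.toReal_mul, ENNReal.toReal_ofReal (abs_nonneg _), measureReal_def,
    finrank_euclideanSpace_fin, abs_of_nonneg (by positivity)]

lemma exists_pow_preimage {L : EuclideanSpace ℝ (Fin d) →L[ℝ] EuclideanSpace ℝ (Fin d)} {C : ℝ}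
    (hC : 0 ≤ C) (h : ∀ y, ∃ x, L x = y ∧ ‖x‖ ≤ C * ‖y‖) (k : ℕ) (y : EuclideanSpace ℝ (Fin d)) :
    ∃ x, (L ^ k) x = y ∧ ‖x‖ ≤ C ^ k * ‖y‖ := by
  induction k generalizing y with
  | zero => exact ⟨y, by simp⟩
  | succ k ih =>
    obtain ⟨x, hx, hxn⟩ := h y
    obtain ⟨x', hx', hxn'⟩ := ih x
    refine ⟨x', by rw [pow_succ']; simp [hx', hx], hxn'.trans ?_⟩
    calc C ^ k * ‖x‖ ≤ C ^ k * (C * ‖y‖) := by gcongr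
      _ = C ^ (k + 1) * ‖y‖ := by ring

lemma card_le_mul_card_suffix {ι S : Type*} [DecidableEq S] (σ : ι → S) (F : Finset ι) {b : ℝ}
    (h : ∀ s, ((F.filter fun j => σ j = s).card : ℝ) ≤ b) :
    (F.card : ℝ) ≤ b * (F.image σ).card := by
  rw [Finset.card_eq_sum_card_image σ F]
  push_cast
  refine (Finset.sum_le_sum fun s _ => h s).trans ?_
  simp [mul_comm]

/-- A subset of the unit cube has a finite `d/N`-dense subset of at most `(2N+1)^d` points:
one representative in each grid cell of side `1/N` that it meets. -/
lemma exists_net {K : Set (EuclideanSpace ℝ (Fin d))} (hK : K ⊆ unitCube d) {N : ℕ} (hN : 0 < N) :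
    ∃ Z : Finset (EuclideanSpace ℝ (Fin d)), (Z : Set _) ⊆ K ∧ Z.card ≤ (2 * N + 1) ^ d ∧
      ∀ z ∈ K, ∃ z₁ ∈ Z, ‖z - z₁‖ ≤ d / N := by
  classical
  have hN' : (0 : ℝ) < N := by exact_mod_cast hN
  let cell : EuclideanSpace ℝ (Fin d) → Fin d → ℤ := fun z i => ⌊N * z i⌋
  let C : Finset (Fin d → ℤ) := Fintype.piFinset fun _ => Finset.Icc (-(N : ℤ)) N
  have hcell : ∀ z ∈ K, cell z ∈ C := by
    intro z hz
    simp only [C, Fintype.mem_piFinset, Finset.mem_Icc, cell]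
    intro i
    have := abs_le.1 (hK hz i)
    constructor
    · rw [Int.le_floor]; push_cast; nlinarith
    · have h : ((⌊(N : ℝ) * z i⌋ : ℤ) : ℝ) ≤ ((N : ℤ) : ℝ) := by
        refine (Int.floor_le _).trans ?_
        push_cast; nlinarith
      exact_mod_cast h
  have hex : ∀ q ∈ C.filter (fun q => ∃ z ∈ K, cell z = q), ∃ z ∈ K, cell z = q :=
    fun q hq => (Finset.mem_filter.1 hq).2
  choose! rep hrep using hex
  refine ⟨(C.filter fun q => ∃ z ∈ K, cell z = q).image rep, ?_, ?_, ?_⟩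
  · intro z hz
    obtain ⟨q, hq, rfl⟩ := Finset.mem_image.1 (Finset.mem_coe.1 hz)
    exact (hrep q hq).1
  · refine Finset.card_image_le.trans ((Finset.card_filter_le _ _).trans ?_)
    simp only [C, Fintype.card_piFinset, Int.card_Icc, Finset.prod_const, Finset.card_univ,
      Fintype.card_fin]
    exact Nat.pow_le_pow_left (by omega) d
  · intro z hz
    have hq : cell z ∈ C.filter fun q => ∃ z ∈ K, cell z = q :=
      Finset.mem_filter.2 ⟨hcell z hz, z, hz, rfl⟩
    refine ⟨rep (cell z), Finset.mem_image_of_mem _ hq, ?_⟩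
    have hco : ∀ i, |(z - rep (cell z)) i| ≤ 1 / N := by
      intro i
      have h1 : ⌊(N : ℝ) * z i⌋ = ⌊(N : ℝ) * rep (cell z) i⌋ :=
        (congrFun (hrep _ hq).2 i).symm
      have h2 := Int.abs_sub_lt_one_of_floor_eq_floor h1
      rw [← mul_sub, abs_mul, abs_of_pos hN'] at h2
      rw [le_div_iff₀ hN', mul_comm]
      exact h2.le
    calc ‖z - rep (cell z)‖ ≤ ∑ i, ‖(z - rep (cell z)) i‖ := by
          rw [EuclideanSpace.norm_eq]
          refine Real.sqrt_le_iff.2 ⟨by positivity, ?_⟩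
          exact Finset.sum_sq_le_sq_sum_of_nonneg fun i _ => norm_nonneg _
      _ ≤ ∑ i : Fin d, (1 / N : ℝ) := Finset.sum_le_sum fun i _ => hco i
      _ = d / N := by simp; ring

lemma half_cube_add {h b : EuclideanSpace ℝ (Fin d)} (hh : h ∈ (1 / 2 : ℝ) • unitCube d)
    (hb : ‖b‖ < 1 / 4) : h + b ∈ unitCube d := by
  obtain ⟨y, hy, rfl⟩ := hh
  intro i
  have h1 := hy i
  have h2 : |b i| ≤ ‖b‖ := PiLp.norm_apply_le b i
  have h3 : ((1 / 2 : ℝ) • y + b) i = 1 / 2 * y i + b i := by simp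
  simp only [h3]
  rw [abs_le] at *
  constructor <;> linarith

/-! ### The construction at a fixed word length -/

/-- The statement for a fixed word length `n`, with `n - k` the suffix length, under the explicit
numerical condition `hfinal`: `T` is half the expected number of half-size pieces through a point,
`(10 ^ d)⁻¹ * (J * (T / β ^ n))` bounds from below the success probability of one suffix, and
`T / β ^ k` the number of suffixes available at a point of `K`. -/
lemma perturbation_of_numeric
    {L : EuclideanSpace ℝ (Fin d) →L[ℝ] EuclideanSpace ℝ (Fin d)}
    (hLbij : Function.Bijective L) (hH : 1 ≤ H)
    {v0 : EuclideanSpace ℝ (Fin d)} {v : Fin H → EuclideanSpace ℝ (Fin d)}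
    (hmap0 : ∀ z ∈ unitCube d, L z + v0 ∈ interior (unitCube d))
    (hmap : ∀ j : Fin H, ∀ z ∈ unitCube d, L z + v j ∈ interior (unitCube d))
    {J β C T : ℝ} (hJ : J = |LinearMap.det L.toLinearMap|) (hβ : 1 < β)
    (hcount : ∀ n : ℕ, 1 ≤ n → ∀ x : EuclideanSpace ℝ (Fin d),
      (Nat.card {w : Fin n → Fin H // x ∈ wordMap L v n w '' unitCube d} : ℝ) ≤ β ^ n)
    (hC0 : 0 ≤ C) (hC : ∀ y, ∃ x, L x = y ∧ ‖x‖ ≤ C * ‖y‖)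
    {n k N : ℕ} (hkn : k ≤ n) (hN0 : 0 < N) (hN : 4 * d * C ^ (2 * n + 2) < N)
    (hT0 : 0 < T) (hT : 2 * T = (J ^ n * (1 / 2) ^ d) * H ^ n)
    (hfinal : ((2 * N + 1 : ℕ) : ℝ) ^ d *
      Real.exp (-(((10 : ℝ) ^ d)⁻¹ * (J * (T / β ^ n)) * (T / β ^ k))) < 1) :
    ∃ w : (Fin n → Fin H) → EuclideanSpace ℝ (Fin d),
      (∀ j, w j ∈ unitCube d) ∧
      (∀ w1 w2 : Fin n → Fin H,
        (∀ i : Fin n, k ≤ (i : ℕ) → w1 i = w2 i) → w w1 = w w2) ∧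
      ∃ K : Set (EuclideanSpace ℝ (Fin d)), K.Nonempty ∧ IsCompact K ∧
        K ⊆ (⋃ j : Fin n → Fin H,
          (fun z => L (wordMap L v n j z) + v0 + (10 : ℝ) • ((L ^ (n + 1)) (w j))) ''
            unitCube d) ∧
        ∀ z ∈ K, ∃ z' ∈ interior K, ∃ j : Fin n → Fin H,
          L (wordMap L v n j z') + v0 + (10 : ℝ) • ((L ^ (n + 1)) (w j)) = z := by
  classical
  have : Nonempty (Fin H) := ⟨⟨0, hH⟩⟩
  have hβ0 : 0 < β := by linarith
  have hJ0 : 0 ≤ J := hJ ▸ abs_nonneg _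
  have hpre := exists_pow_preimage hC0 hC
  have hcont : ∀ j : Fin n → Fin H, Continuous (wordMap L v n j) := fun j => by
    have : wordMap L v n j = fun z => (L ^ n) z + wordMap L v n j 0 :=
      funext fun z => wordMap_affine L v n j z
    rw [this]; fun_prop
  have hhalf : (1 / 2 : ℝ) • unitCube d ⊆ unitCube d := fun h hh => by
    simpa using half_cube_add (b := 0) hh (by simp)
  -- `A`: points covered by at least `T` pieces; `U`: the same for the pieces shrunk by `1/2`.
  set A := multSet (fun j => wordMap L v n j '' unitCube d) T with hA
  set U := multSet (fun j => wordMap L v n j '' ((1 / 2 : ℝ) • unitCube d)) T with hU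
  have hpiece : ∀ j, wordMap L v n j '' unitCube d ⊆ unitCube d := by
    rintro j _ ⟨z, hz, rfl⟩
    exact wordMap_mem_unitCube L v hmap n j hz
  have hhc : IsCompact ((1 / 2 : ℝ) • unitCube d) := (isCompact_unitCube d).smul _
  have hAcl : IsClosed A :=
    isClosed_multSet T fun j => ((isCompact_unitCube d).image (hcont j)).isClosed
  have hUcl : IsClosed U := isClosed_multSet T fun j => (hhc.image (hcont j)).isClosed
  have hAB : A ⊆ unitCube d := by
    rintro x ⟨F, hF, hx⟩
    have : F.Nonempty := by
      rw [← Finset.card_pos]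
      exact_mod_cast hT0.trans_le hF
    obtain ⟨j, hj⟩ := this
    exact hpiece j (hx j hj)
  have hUA : U ⊆ A := fun x ⟨F, hF, hx⟩ =>
    ⟨F, hF, fun j hj => image_mono hhalf (hx j hj)⟩
  have hAc : IsCompact A := (isCompact_unitCube d).of_isClosed_subset hAcl hAB
  have hUc : IsCompact U := hAc.of_isClosed_subset hUcl hUA
  have hUvol : T / β ^ n ≤ volume.real U := by
    refine measure_multSet_ge volume (a := J ^ n * (1 / 2) ^ d) hT0.le (by positivity)
      (isClosed_unitCube d).measurableSet (volume_unitCube d)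
      (fun j => (hhc.image (hcont j)).isClosed.measurableSet)
      (fun j => (image_mono hhalf).trans (hpiece j)) (fun j => ?_) (fun x F hF => ?_) ?_
      hUcl.measurableSet
    · have : wordMap L v n j = fun z => (L ^ n) z + wordMap L v n j 0 :=
        funext fun z => wordMap_affine L v n j z
      rw [this, volume_image_affine, measureReal_def, Measure.addHaar_smul, volume_unitCube,
        ContinuousLinearMap.toLinearMap_pow, map_pow, abs_pow, ← hJ, finrank_euclideanSpace_fin]
      simp
    · exact card_words_suffix_le hLbij.1 v hcount le_rfl (Classical.arbitrary _) x F
        (fun j hj => image_mono hhalf (hF j hj)) fun j _ i hi => absurd i.2 (by omega)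
    · simp [hT]
  let L0 : EuclideanSpace ℝ (Fin d) → EuclideanSpace ℝ (Fin d) := fun z => L z + v0
  have hL0c : Continuous L0 := by fun_prop
  have hL0B : ∀ z ∈ unitCube d, L0 z ∈ unitCube d := fun z hz => interior_subset (hmap0 z hz)
  set K := L0 '' A with hK
  have hKB : K ⊆ unitCube d := by
    rintro _ ⟨x, hx, rfl⟩
    exact hL0B x (hAB hx)
  have hVB : L0 '' U ⊆ unitCube d := (image_mono hUA).trans hKB
  have hVm : MeasurableSet (L0 '' U) := (hUc.image hL0c).isClosed.measurableSet
  have hVvol : J * (T / β ^ n) ≤ volume.real (L0 '' U) := by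
    rw [volume_image_affine, ← hJ]; gcongr
  obtain ⟨Z, hZK, hZcard, hZnet⟩ := exists_net hKB hN0
  let S := {i : Fin n // k ≤ (i : ℕ)} → Fin H
  let σ : (Fin n → Fin H) → S := fun j i => j i
  -- For `z ∈ K`, the suffixes of the pieces through `z`, with a word and a preimage for each.
  have hsub : ∀ z ∈ Z, ∃ sub : Finset S, T / β ^ k ≤ sub.card ∧
      ∀ s ∈ sub, ∃ j, σ j = s ∧ ∃ y ∈ unitCube d, L0 (wordMap L v n j y) = z := by
    intro z hz
    obtain ⟨x, ⟨F, hFT, hF⟩, rfl⟩ := hZK hz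
    refine ⟨F.image σ, ?_, ?_⟩
    · rw [div_le_iff₀ (by positivity), mul_comm]
      refine hFT.trans (card_le_mul_card_suffix σ F fun s => ?_)
      rcases (F.filter fun j => σ j = s).eq_empty_or_nonempty with h | ⟨j₀, hj₀⟩
      · rw [h]; simp; positivity
      · refine card_words_suffix_le hLbij.1 v hcount hkn j₀ x _
          (fun j hj => hF j (Finset.mem_filter.1 hj).1) fun j hj i hi => ?_
        have h1 := (Finset.mem_filter.1 hj).2.trans (Finset.mem_filter.1 hj₀).2.symm
        exact congrFun h1 ⟨i, hi⟩
    · intro s hs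
      obtain ⟨j, hj, rfl⟩ := Finset.mem_image.1 hs
      obtain ⟨y, hy, hyx⟩ := hF j hj
      exact ⟨j, rfl, y, hy, by rw [hyx]⟩
  choose! sub hsubcard jj hjj yy hyy hyz using hsub
  let μ : Measure (EuclideanSpace ℝ (Fin d)) := volume.restrict (unitCube d)
  have : IsProbabilityMeasure μ := ⟨by simp [μ, volume_unitCube]⟩
  -- `yy z s - 10 w` is the preimage of `z` under the perturbed map with parameter `w`.
  let good : EuclideanSpace ℝ (Fin d) → S → Set (EuclideanSpace ℝ (Fin d)) :=
    fun z s => {w | yy z s - (10 : ℝ) • w ∈ L0 '' U}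
  have hgoodB : ∀ z ∈ Z, ∀ s ∈ sub z, good z s ⊆ unitCube d := by
    intro z hz s hs w hw i
    have h1 := hVB hw i
    have h2 := hyy z hz s hs i
    have h3 : (yy z s - (10 : ℝ) • w) i = yy z s i - 10 * w i := by simp
    rw [h3] at h1
    rw [abs_le] at *
    constructor <;> linarith
  have hgoodm : ∀ z ∈ Z, ∀ s ∈ sub z, MeasurableSet (good z s) := fun z _ s _ =>
    hVm.preimage (by fun_prop : Measurable fun w => yy z s - (10 : ℝ) • w)
  obtain ⟨ω, hω⟩ := exists_selection μ Z sub good (((10 : ℝ) ^ d)⁻¹ * (J * (T / β ^ n)))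
    (((10 : ℝ) ^ d)⁻¹ * (J * (T / β ^ n)) * (T / β ^ k)) hgoodm
    (by
      intro z hz s hs
      rw [measureReal_restrict_apply (hgoodm z hz s hs), inter_eq_left.2 (hgoodB z hz s hs),
        volume_preimage_sub_smul _ hVm]
      gcongr)
    (by
      intro z hz
      have := hsubcard z hz
      gcongr)
    (by
      refine lt_of_le_of_lt ?_ hfinal
      gcongr
      exact_mod_cast hZcard)
  -- Good sets lie in the cube, so parameters outside it may be reset to `0`.
  let ω' : S → EuclideanSpace ℝ (Fin d) := fun s => if ω s ∈ unitCube d then ω s else 0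
  have hrec : ∀ z ∈ K, ∃ z' ∈ interior K, ∃ j : Fin n → Fin H,
      L (wordMap L v n j z') + v0 + (10 : ℝ) • ((L ^ (n + 1)) (ω' (σ j))) = z := by
    intro z hz
    obtain ⟨z₁, hz₁, hd⟩ := hZnet z hz
    obtain ⟨s, hs, hgood⟩ := hω z₁ hz₁
    have hω's : ω' s = ω s := if_pos (hgoodB z₁ hz₁ s hs hgood)
    obtain ⟨u, hu, hu'⟩ := hgood
    obtain ⟨b, hb, hbn⟩ := hpre (2 * n + 2) (z - z₁)
    have hb4 : ‖b‖ < 1 / 4 := by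
      have hNr : (0 : ℝ) < N := by exact_mod_cast hN0
      calc ‖b‖ ≤ C ^ (2 * n + 2) * ‖z - z₁‖ := hbn
        _ ≤ C ^ (2 * n + 2) * (d / N) := by gcongr
        _ < 1 / 4 := by
          rw [← mul_div_assoc, div_lt_iff₀ hNr]; linarith
    -- Moving from `z₁` to `z` moves the preimage `L u + v0` by `L ^ (n + 1) b`; this stays in `K`
    -- because `u` lies in `T` half-size pieces and `b` is short.
    have hopen : IsOpenMap fun x => (L ^ (n + 1)) x + (L u + v0) :=
      (isOpenMap_add_right (L u + v0)).comp
        ((L ^ (n + 1)).isOpenMap fun y => (hpre (n + 1) y).imp fun _ h => h.1)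
    have hin : (fun x => (L ^ (n + 1)) x + (L u + v0)) '' Metric.ball 0 (1 / 4) ⊆ K := by
      rintro _ ⟨x, hx, rfl⟩
      obtain ⟨F, hFT, hF⟩ := hu
      refine ⟨u + (L ^ n) x, ⟨F, hFT, fun j hj => ?_⟩, ?_⟩
      · obtain ⟨h, hh, hhu⟩ := hF j hj
        refine ⟨h + x, half_cube_add hh (by simpa using hx), ?_⟩
        rw [wordMap_affine] at hhu ⊢
        rw [← hhu, map_add]; abel
      · simp only [L0, map_add, pow_succ', mul_apply_eq_comp]; abel
    refine ⟨(L ^ (n + 1)) b + (L u + v0), interior_maximal hin (hopen _ Metric.isOpen_ball)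
      ⟨b, by simpa using hb4, rfl⟩, jj z₁ s, ?_⟩
    rw [hjj z₁ hz₁ s hs, hω's]
    have h1 := hyz z₁ hz₁ s hs
    have h2 : L u + v0 = yy z₁ s - (10 : ℝ) • ω s := hu'
    have h3 : (L ^ (n + 1)) ((L ^ (n + 1)) b) = z - z₁ := by
      rw [← hb, ← mul_apply_eq_comp, ← pow_add]; congr 2; ring
    have hG : ∀ y, L (wordMap L v n (jj z₁ s) y)
        = (L ^ (n + 1)) y + L (wordMap L v n (jj z₁ s) 0) := fun y => by
      rw [wordMap_affine, map_add, pow_succ']; rfl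
    simp only [L0] at h1
    rw [hG] at h1 ⊢
    rw [h2, map_add, h3, map_sub, map_smul]
    linear_combination (norm := module) h1
  refine ⟨fun j => ω' (σ j), fun j => ?_, fun j j' h => ?_, K, ?_, hAc.image hL0c, ?_, hrec⟩
  · simp only [ω']
    split_ifs with h
    · exact h
    · intro i; simp
  · have : σ j = σ j' := funext fun i => h i i.2
    simp only [this]
  · have : U.Nonempty := by
      rw [nonempty_iff_ne_empty]
      intro h
      rw [h] at hUvol
      have : 0 < T / β ^ n := by positivity
      simp at hUvol
      linarith
    exact (this.mono hUA).image _
  · intro z hz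
    obtain ⟨z', hz', j, hj⟩ := hrec z hz
    exact mem_iUnion.2 ⟨j, z', hKB (interior_subset hz'), hj⟩

/-- A doubly exponentially small factor beats the exponential cardinality of the net. -/
lemma eventually_numeric (d : ℕ) {D M c₀ θ : ℝ} (hD : 0 < D) (hM : 0 < M) (hc₀ : 0 < c₀)
    (hθ : 1 < θ) :
    ∀ᶠ n : ℕ in Filter.atTop, (D * M ^ n) ^ d * Real.exp (-(c₀ * θ ^ n)) < 1 := by
  have h1 : Filter.Tendsto (fun n : ℕ => (d * Real.log D) * (1 / θ ^ n) +
      (d * Real.log M) * ((n : ℝ) ^ 1 / θ ^ n)) Filter.atTop (nhds 0) := by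
    have ha := (tendsto_pow_const_div_const_pow_of_one_lt 0 hθ).const_mul (d * Real.log D)
    have hb := (tendsto_pow_const_div_const_pow_of_one_lt 1 hθ).const_mul (d * Real.log M)
    simpa using ha.add hb
  filter_upwards [h1.eventually_lt_const hc₀] with n hn
  have hθn : 0 < θ ^ n := by positivity
  have h2 : d * (Real.log D + n * Real.log M) < c₀ * θ ^ n := by
    have := mul_lt_mul_of_pos_right hn hθn
    field_simp at this
    linarith
  have h3 : (D * M ^ n) ^ d = Real.exp (d * (Real.log D + n * Real.log M)) := by
    rw [Real.exp_nat_mul, Real.exp_add, Real.exp_log hD, Real.exp_nat_mul, Real.exp_log hM]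
  rw [h3, ← Real.exp_add, Real.exp_lt_one_iff]
  linarith

end Helpers

/-- **Probabilistic perturbation of iterated function systems (Proposition p.IFS).**
Under the dimension-deficit assumption `β^{2−c} < (J·H)²`, for all large `n` one can choose
translation parameters `w_{j̲}`, depending only on the last `m = ⌊cn⌋+1` letters of the word
`j̲`, such that the perturbed IFS `z ↦ L₀(L_{j̲}(z)) + 10·L^{n+1}(w_{j̲})` satisfies the
recurrent compact condition. -/
theorem ifs_perturbation_recurrent_compact
    (d : ℕ) (hd : 1 ≤ d)
    (L : EuclideanSpace ℝ (Fin d) →L[ℝ] EuclideanSpace ℝ (Fin d))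
    (hLbij : Function.Bijective L) (hLnorm : ‖L‖ < 1)
    (H : ℕ) (hH : 1 ≤ H)
    (v0 : EuclideanSpace ℝ (Fin d)) (v : Fin H → EuclideanSpace ℝ (Fin d))
    (hv0 : v0 ∈ unitCube d) (hv : ∀ j, v j ∈ unitCube d)
    (hmap0 : ∀ z ∈ unitCube d, L z + v0 ∈ interior (unitCube d))
    (hmap : ∀ j : Fin H, ∀ z ∈ unitCube d, L z + v j ∈ interior (unitCube d))
    (J : ℝ) (hJ : J = |LinearMap.det L.toLinearMap|)
    (β c : ℝ) (hβ : 1 < β) (hc : c ∈ Set.Ioo (0 : ℝ) 1)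
    (hdim : β ^ ((2 : ℝ) - c) < (J * H) ^ 2)
    (hcount : ∀ n : ℕ, 1 ≤ n → ∀ x : EuclideanSpace ℝ (Fin d),
      (Nat.card {w : Fin n → Fin H // x ∈ wordMap L v n w '' unitCube d} : ℝ) ≤ β ^ n) :
    ∃ n₀ : ℕ, ∀ n : ℕ, n₀ ≤ n →
      ∃ w : (Fin n → Fin H) → EuclideanSpace ℝ (Fin d),
        (∀ j, w j ∈ unitCube d) ∧
        (∀ w1 w2 : Fin n → Fin H,
          (∀ i : Fin n, n - (Nat.floor (c * n) + 1) ≤ (i : ℕ) → w1 i = w2 i) →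
          w w1 = w w2) ∧
        ∃ K : Set (EuclideanSpace ℝ (Fin d)), K.Nonempty ∧ IsCompact K ∧
          K ⊆ (⋃ j : Fin n → Fin H,
            (fun z => L (wordMap L v n j z) + v0 + (10 : ℝ) • ((L ^ (n + 1)) (w j))) ''
              unitCube d) ∧
          ∀ z ∈ K, ∃ z' ∈ interior K, ∃ j : Fin n → Fin H,
            L (wordMap L v n j z') + v0 + (10 : ℝ) • ((L ^ (n + 1)) (w j)) = z := by
  obtain ⟨C₁, hC₁, hL₁⟩ := L.exists_preimage_norm_le hLbij.2
  set C := max C₁ 1 with hC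
  have hC1 : 1 ≤ C := le_max_right _ _
  have hLC : ∀ y, ∃ x, L x = y ∧ ‖x‖ ≤ C * ‖y‖ := fun y =>
    (hL₁ y).imp fun x h => ⟨h.1, h.2.trans (by gcongr; exact le_max_left _ _)⟩
  have hβ0 : 0 < β := by linarith
  have hJ0 : 0 < J := by
    refine lt_of_le_of_ne (hJ ▸ abs_nonneg _) ?_
    rintro rfl
    have : (0 : ℝ) < β ^ ((2 : ℝ) - c) := by positivity
    simp at hdim
    linarith
  have hH0 : (0 : ℝ) < H := by exact_mod_cast hH
  have hθ : 1 < (J * H) ^ 2 / β ^ ((2 : ℝ) - c) := by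
    rwa [one_lt_div (by positivity)]
  have hev := eventually_numeric d (D := 8 * d * C ^ 2 + 3) (M := C ^ 2)
    (c₀ := ((10 : ℝ) ^ d)⁻¹ * J * (1 / 2 ^ (d + 1)) ^ 2) (by positivity) (by positivity)
    (by positivity) hθ
  obtain ⟨n₀, hn₀⟩ := Filter.eventually_atTop.1 hev
  refine ⟨n₀, fun n hn => ?_⟩
  set k := n - (Nat.floor (c * n) + 1) with hk
  have hnk : (n : ℝ) + k ≤ (2 - c) * n := by
    rcases le_total (Nat.floor (c * n) + 1) n with h | h
    · have h1 := Nat.lt_floor_add_one (c * n)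
      rw [hk, Nat.cast_sub h]
      push_cast
      linarith
    · have h0 : k = 0 := by omega
      have : (0 : ℝ) ≤ n := n.cast_nonneg
      rw [h0]
      push_cast
      nlinarith [hc.2]
  have hβnk : β ^ n * β ^ k ≤ (β ^ ((2 : ℝ) - c)) ^ n := by
    rw [← pow_add, ← Real.rpow_natCast, ← Real.rpow_natCast, ← Real.rpow_mul hβ0.le]
    refine Real.rpow_le_rpow_of_exponent_le hβ.le ?_
    push_cast
    exact hnk
  -- The grid mesh `1/N` must be below `C ^ (-(2 * n + 2)) / (4 d)`, so `N` is exponential in `n`.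
  have hCn : 1 ≤ (C ^ 2) ^ n := one_le_pow₀ (one_le_pow₀ hC1)
  have hfl : (Nat.floor (4 * d * C ^ (2 * n + 2)) : ℝ) ≤ 4 * d * C ^ (2 * n + 2) :=
    Nat.floor_le (by positivity)
  refine perturbation_of_numeric hLbij hH hmap0 hmap hJ hβ hcount (C := C)
    (T := (J * H) ^ n * (1 / 2 ^ (d + 1))) (k := k)
    (N := Nat.floor (4 * d * C ^ (2 * n + 2)) + 1) (by linarith) hLC (Nat.sub_le _ _)
    (Nat.succ_pos _) (by push_cast; exact Nat.lt_floor_add_one _) (by positivity)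
    (by rw [mul_pow, one_div_pow, pow_succ]; field_simp) ?_
  refine lt_of_le_of_lt ?_ (hn₀ n hn)
  gcongr ?_ ^ d * Real.exp (-?_)
  · push_cast
    have : C ^ (2 * n + 2) = C ^ 2 * (C ^ 2) ^ n := by rw [← pow_mul, pow_add]; ring
    rw [this] at hfl ⊢
    nlinarith
  · rw [div_pow ((J * H) ^ 2), ← pow_mul (J * H), mul_comm 2 n, pow_mul]
    calc ((10 : ℝ) ^ d)⁻¹ * J * (1 / 2 ^ (d + 1)) ^ 2 *
          (((J * H) ^ n) ^ 2 / (β ^ ((2 : ℝ) - c)) ^ n)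
        ≤ ((10 : ℝ) ^ d)⁻¹ * J * (1 / 2 ^ (d + 1)) ^ 2 *
          (((J * H) ^ n) ^ 2 / (β ^ n * β ^ k)) := by gcongr
      _ = _ := by field_simp
end

section
/- Fix integers d_u, d_s ≥ 0 and let E = ℝ^{d_u} × ℝ^{d_s}, where each factor carries the Euclidean norm and E carries the norm ‖(u,v)‖ = max(‖u‖, ‖v‖). For every κ > 0 there exist θ > 0 and η₀ > 0 with the following property. Let (L_n^u)_{n∈ℤ} be invertible linear maps of ℝ^{d_u} with ‖(L_n^u)⁻¹‖ ≤ e^{−κ}, let (L_n^s)_{n∈ℤ} be linear maps of ℝ^{d_s} with ‖L_n^s‖ ≤ e^{−κ}, and set L_n = L_n^u × L_n^s on E. Let (g_n)_{n∈ℤ} be maps g_n : E → E such that g_n − L_n is Lipschitz with constant η₀. Then for every ε > 0 and every sequence (x_n)_{n∈ℤ} in E with ‖g_n(x_n) − x_{n+1}‖ ≤ ε for all n ∈ ℤ, there exists exactly one sequence (y_n)_{n∈ℤ} in E satisfying g_n(y_n) = y_{n+1} for all n and sup_{n∈ℤ} ‖y_n − x_n‖ ≤ θ·ε. -/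
/-!
The orbits of `(g_n)` are the fixed points of the operator `T` on sequences which moves the stable
coordinate forwards with `g_{n-1}` and pulls the unstable one back with `(L_n^u)⁻¹`:

* `(T z)_n^s = (g_{n-1}(z_{n-1}))^s`,
* `(T z)_n^u = z_n^u + (L_n^u)⁻¹ (z_{n+1}^u - (g_n(z_n))^u)`.

Writing `g_n = L_n + h_n` with `h_n` `η₀`-Lipschitz, the terms `L_n^u z_n^u` cancel in the second line,
so `T` contracts the sup distance by the factor `λ = e^{-κ} + η₀`, which is `< 1` for
`η₀ = (1 - e^{-κ}) / 2`. An `ε`-pseudo-orbit `x` is moved by at most `ε`, so Banach's fixed point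
theorem on the sequences at bounded distance from `x` (`exists_unique_fixed_sequence`) gives exactly
one orbit there, at distance at most `ε / (1 - λ)` from `x`; hence `θ = 1 / (1 - λ)`.
-/

open scoped BoundedContinuousFunction in
/-- Banach's fixed point theorem for an operator on sequences that contracts the (possibly infinite)
sup distance and moves the sequence `x` by a bounded amount. -/
lemma exists_unique_fixed_sequence {E : Type*} [NormedAddCommGroup E] [CompleteSpace E]
    (T : (ℤ → E) → ℤ → E) (x : ℤ → E) (l ε : ℝ) (hl0 : 0 ≤ l) (hl1 : l < 1)
    (hT : ∀ (y z : ℤ → E) (C : ℝ), (∀ n, ‖y n - z n‖ ≤ C) → ∀ n, ‖T y n - T z n‖ ≤ l * C)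
    (hx : ∀ n, ‖T x n - x n‖ ≤ ε) :
    ∃! y : ℤ → E, T y = y ∧ ∀ n, ‖y n - x n‖ ≤ 1 / (1 - l) * ε := by
  have hε : 0 ≤ ε := (norm_nonneg _).trans (hx 0)
  have hw (w : ℤ →ᵇ E) (n : ℤ) : ‖T (x + w) n - x n‖ ≤ l * ‖w‖ + ε := by
    have h1 := hT (x + w) x ‖w‖ (fun n => by simpa using w.norm_coe_le_norm n) n
    calc ‖T (x + w) n - x n‖ = ‖(T (x + w) n - T x n) + (T x n - x n)‖ := by congr 1; abel
      _ ≤ _ := (norm_add_le _ _).trans (add_le_add h1 (hx n))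
  -- `T` acting on the deviations `w = y - x`, which form a complete space.
  let F : (ℤ →ᵇ E) → (ℤ →ᵇ E) := fun w =>
    BoundedContinuousFunction.ofNormedAddCommGroupDiscrete (fun n => T (x + w) n - x n)
      (l * ‖w‖ + ε) (hw w)
  have hF (w : ℤ →ᵇ E) (n : ℤ) : F w n = T (x + w) n - x n := rfl
  have hc : ContractingWith ⟨l, hl0⟩ F := by
    refine ⟨hl1, LipschitzWith.of_dist_le_mul fun w v => ?_⟩
    change _ ≤ l * dist w v
    refine (BoundedContinuousFunction.dist_le (by positivity)).2 fun n => ?_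
    have h1 := hT (x + w) (x + v) (dist w v) (fun n => by
      simpa [dist_eq_norm] using BoundedContinuousFunction.dist_coe_le_dist (f := w) (g := v) n) n
    simpa [hF, dist_eq_norm] using h1
  have hfix : F (hc.fixedPoint F) = hc.fixedPoint F := hc.fixedPoint_isFixedPt
  refine ⟨x + hc.fixedPoint F, ⟨?_, fun n => ?_⟩, ?_⟩
  · funext n
    have := DFunLike.congr_fun hfix n
    rw [hF, sub_eq_iff_eq_add'] at this
    simpa using this
  · have h1 := hc.dist_fixedPoint_le 0
    have h2 : dist 0 (F 0) ≤ ε := by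
      rw [dist_zero_left]
      refine (BoundedContinuousFunction.norm_le hε).2 fun n => ?_
      simpa [hF] using hx n
    have h3 := (hc.fixedPoint F).norm_coe_le_norm n
    rw [dist_zero_left] at h1
    have h4 : dist 0 (F 0) / (1 - l) ≤ ε / (1 - l) :=
      div_le_div_of_nonneg_right h2 (by linarith)
    have h5 : ‖hc.fixedPoint F n‖ ≤ ε / (1 - l) := h3.trans (h1.trans h4)
    simpa [div_eq_inv_mul] using h5
  · rintro y ⟨hy, hyx⟩
    let w : ℤ →ᵇ E := BoundedContinuousFunction.ofNormedAddCommGroupDiscrete (fun n => y n - x n)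
      _ hyx
    have hxw : x + (w : ℤ → E) = y := by
      funext n
      change x n + (y n - x n) = y n
      abel
    have hwfix : F w = w := by
      ext1 n
      rw [hF, hxw, hy]
      rfl
    rw [← hxw, hc.fixedPoint_unique hwfix]

/-- **Shadowing for sequences of hyperbolic maps: existence and uniqueness.**
On `E = ℝ^{d_u} × ℝ^{d_s}` with the max norm, for every `κ > 0` there are `θ, η₀ > 0` such
that for any sequence of block-hyperbolic linear maps `L_n = L_n^u × L_n^s` (with
`‖(L_n^u)⁻¹‖ ≤ e^{−κ}` and `‖L_n^s‖ ≤ e^{−κ}`) and maps `g_n` with `g_n − L_n` Lipschitz of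
constant `η₀`, every `ε`-pseudo-orbit of `(g_n)` is `θε`-shadowed by a unique true orbit. -/
theorem shadowing_sequence_exists_unique (du ds : ℕ) (κ : ℝ) (hκ : 0 < κ) :
    ∃ θ : ℝ, 0 < θ ∧ ∃ η₀ : ℝ, 0 < η₀ ∧
      ∀ (Lu : ℤ → (EuclideanSpace ℝ (Fin du) →L[ℝ] EuclideanSpace ℝ (Fin du)))
        (Ls : ℤ → (EuclideanSpace ℝ (Fin ds) →L[ℝ] EuclideanSpace ℝ (Fin ds))),
        (∀ n, Function.Bijective (Lu n)) →
        (∀ n, ∀ u : EuclideanSpace ℝ (Fin du), ‖u‖ ≤ Real.exp (-κ) * ‖Lu n u‖) →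
        (∀ n, ‖Ls n‖ ≤ Real.exp (-κ)) →
        ∀ g : ℤ → (EuclideanSpace ℝ (Fin du) × EuclideanSpace ℝ (Fin ds)) →
            (EuclideanSpace ℝ (Fin du) × EuclideanSpace ℝ (Fin ds)),
        (∀ n, ∀ x y : EuclideanSpace ℝ (Fin du) × EuclideanSpace ℝ (Fin ds),
          ‖(g n x - (ContinuousLinearMap.prodMap (Lu n) (Ls n)) x) -
            (g n y - (ContinuousLinearMap.prodMap (Lu n) (Ls n)) y)‖ ≤ η₀ * ‖x - y‖) →
        ∀ ε : ℝ, 0 < ε →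
        ∀ x : ℤ → EuclideanSpace ℝ (Fin du) × EuclideanSpace ℝ (Fin ds),
          (∀ n, ‖g n (x n) - x (n + 1)‖ ≤ ε) →
          ∃! y : ℤ → EuclideanSpace ℝ (Fin du) × EuclideanSpace ℝ (Fin ds),
            (∀ n, g n (y n) = y (n + 1)) ∧ (∀ n, ‖y n - x n‖ ≤ θ * ε) := by
  have ha0 : 0 < Real.exp (-κ) := Real.exp_pos _
  have ha1 : Real.exp (-κ) < 1 := by simpa using hκ
  set a := Real.exp (-κ) with ha
  refine ⟨1 / (1 - (a + (1 - a) / 2)), one_div_pos.2 (by linarith), (1 - a) / 2, by linarith, ?_⟩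
  intro Lu Ls hbij hu hs g hg ε hε x hx
  set η := (1 - a) / 2 with hη
  have hη0 : 0 < η := by linarith
  -- `M n` is the inverse of `Lu n`.
  choose M hM using fun n => (hbij n).2
  have hMle (n : ℤ) (p : EuclideanSpace ℝ (Fin du)) : ‖M n p‖ ≤ a * ‖p‖ := by
    simpa only [hM] using hu n (M n p)
  let T : (ℤ → EuclideanSpace ℝ (Fin du) × EuclideanSpace ℝ (Fin ds)) →
      ℤ → EuclideanSpace ℝ (Fin du) × EuclideanSpace ℝ (Fin ds) := fun z n =>
    ((z n).1 + M n ((z (n + 1)).1 - (g n (z n)).1), (g (n - 1) (z (n - 1))).2)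
  have horbit (z) : T z = z ↔ ∀ n, g n (z n) = z (n + 1) := by
    constructor
    · intro h n
      refine Prod.ext ?_ ?_
      · have h1 : (z n).1 + M n ((z (n + 1)).1 - (g n (z n)).1) = (z n).1 :=
          congrArg Prod.fst (congrFun h n)
        have h2 := hM n ((z (n + 1)).1 - (g n (z n)).1)
        rw [add_eq_left.1 h1, map_zero] at h2
        exact (sub_eq_zero.1 h2.symm).symm
      · have h1 : (T z (n + 1)).2 = (z (n + 1)).2 := by rw [h]
        change (g (n + 1 - 1) (z (n + 1 - 1))).2 = _ at h1
        rwa [add_sub_cancel_right] at h1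
    · intro h
      funext n
      refine Prod.ext ?_ ?_
      · change (z n).1 + M n ((z (n + 1)).1 - (g n (z n)).1) = (z n).1
        rw [h n, sub_self, add_eq_left]
        exact (hbij n).1 (by rw [hM, map_zero])
      · change (g (n - 1) (z (n - 1))).2 = (z n).2
        rw [h (n - 1), sub_add_cancel]
  have key := exists_unique_fixed_sequence T x (a + η) ε (by linarith) (by linarith) ?_ ?_
  · simpa only [horbit] using key
  · intro y z C hC n
    have hC0 : 0 ≤ C := (norm_nonneg _).trans (hC 0)
    have hh (m : ℤ) := (hg m (y m) (z m)).trans (mul_le_mul_of_nonneg_left (hC m) hη0.le)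
    refine max_le ?_ ?_
    · have h1 := (norm_fst_le _).trans (hh n)
      have h2 := (norm_fst_le _).trans (hC (n + 1))
      have h3 := hu n (T y n - T z n).1
      have h4 : Lu n (T y n - T z n).1 = (y (n + 1) - z (n + 1)).1 -
          ((g n (y n) - (ContinuousLinearMap.prodMap (Lu n) (Ls n)) (y n)) -
            (g n (z n) - (ContinuousLinearMap.prodMap (Lu n) (Ls n)) (z n))).1 := by
        simp only [T, Prod.fst_sub, map_sub, map_add, hM, ContinuousLinearMap.coe_prodMap',
          Prod.map_fst]
        abel
      rw [h4] at h3
      calc _ ≤ _ := h3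
        _ ≤ a * (C + η * C) := by
          gcongr
          exact (norm_sub_le _ _).trans (add_le_add h2 h1)
        _ ≤ (a + η) * C := by nlinarith [mul_nonneg hη0.le hC0]
    · have h1 := (norm_snd_le _).trans (hh (n - 1))
      have h2 := (norm_snd_le _).trans (hC (n - 1))
      have h3 := (Ls (n - 1)).le_of_opNorm_le (hs (n - 1)) (y (n - 1) - z (n - 1)).2
      have h4 : (T y n - T z n).2 = Ls (n - 1) (y (n - 1) - z (n - 1)).2 +
          ((g (n - 1) (y (n - 1)) -
              (ContinuousLinearMap.prodMap (Lu (n - 1)) (Ls (n - 1))) (y (n - 1))) -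
            (g (n - 1) (z (n - 1)) -
              (ContinuousLinearMap.prodMap (Lu (n - 1)) (Ls (n - 1))) (z (n - 1)))).2 := by
        simp only [T, Prod.snd_sub, map_sub, ContinuousLinearMap.coe_prodMap', Prod.map_snd]
        abel
      rw [h4]
      calc _ ≤ _ := norm_add_le _ _
        _ ≤ a * C + η * C := add_le_add (h3.trans (mul_le_mul_of_nonneg_left h2 ha0.le)) h1
        _ = (a + η) * C := by ring
  · intro n
    refine max_le ?_ ?_
    · have h1 := (norm_fst_le _).trans (hx n)
      have h2 := hMle n ((x (n + 1)).1 - (g n (x n)).1)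
      rw [norm_sub_rev (x (n + 1)).1] at h2
      have h3 : (T x n - x n).1 = M n ((x (n + 1)).1 - (g n (x n)).1) := by
        simp [T]
      rw [h3]
      rw [Prod.fst_sub] at h1
      nlinarith
    · have h1 := (norm_snd_le _).trans (hx (n - 1))
      rwa [sub_add_cancel] at h1
end

section
/- Fix integers d_u, d_s ≥ 0 and let E = ℝ^{d_u} × ℝ^{d_s}, where each factor carries the Euclidean norm and E carries the norm ‖(u,v)‖ = max(‖u‖, ‖v‖). For all real numbers 0 < κ < κ₀ there exists η₀ > 0 with the following property. Let n₁ ≤ n₂ be integers; for n₁ ≤ n < n₂ let L_n^u be an invertible linear map of ℝ^{d_u} with ‖(L_n^u)⁻¹‖ ≤ e^{−κ₀}, let L_n^s be a linear map of ℝ^{d_s} with ‖L_n^s‖ ≤ e^{−κ₀}, set L_n = L_n^u × L_n^s, and let g_n : E → E be a map such that g_n − L_n is Lipschitz with constant η₀. If (y_n)_{n₁ ≤ n ≤ n₂} and (z_n)_{n₁ ≤ n ≤ n₂} are sequences in E satisfying g_n(y_n) = y_{n+1} and g_n(z_n) = z_{n+1} for all n₁ ≤ n < n₂, then for every k with n₁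 ≤ k ≤ n₂: ‖z_k − y_k‖ ≤ e^{−κ(k−n₁)}·‖z_{n₁} − y_{n₁}‖ + e^{−κ(n₂−k)}·‖z_{n₂} − y_{n₂}‖. -/
/-!
The argument is a cone argument. Write `(u_n, v_n) = z_n - y_n`, `a_n = ‖u_n‖`, `b_n = ‖v_n‖`,
`l = e^{-κ₀}`, `m = e^{-κ}` and take `η₀ = m - l`. The hypotheses give
`b_{n+1} ≤ l b_n + η₀ max(a_n, b_n)` and `a_n ≤ l (a_{n+1} + η₀ max(a_n, b_n))`.

If `b_n ≤ a_n` (unstable cone), the choice of `η₀` yields `a_n ≤ m a_{n+1}` and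
`b_{n+1} ≤ a_{n+1}`: the unstable cone is forward invariant and `a` grows there at rate `e^κ`.
If `a_n ≤ b_n`, then `b_{n+1} ≤ m b_n`. Hence if `z_k - y_k` is in the unstable cone, it stays
there up to time `n₂` and `‖z_k - y_k‖ ≤ m^{n₂-k} ‖z_{n₂} - y_{n₂}‖`; otherwise it was outside
the cone at all times since `n₁`, and `‖z_k - y_k‖ ≤ m^{k-n₁} ‖z_{n₁} - y_{n₁}‖`.
-/

/-- Forward invariance of the unstable cone `b ≤ a`, with expansion of `a` by `m⁻¹`. -/
lemma unstable_cone_step {l m a b a' b' : ℝ} (hl : 0 < l) (hlm : l < m) (hm : m < 1)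
    (ha : 0 ≤ a) (ha' : 0 ≤ a') (hb : b' ≤ l * b + (m - l) * max a b)
    (hu : a ≤ l * (a' + (m - l) * max a b)) (hab : b ≤ a) :
    b' ≤ a' ∧ a ≤ m * a' := by
  rw [max_eq_left hab] at hb hu
  have hc : 0 < 1 - l * (m - l) := by nlinarith
  -- `l ≤ m (1 - l (m - l))` because `m l ≤ 1`
  have hlc : l ≤ m * (1 - l * (m - l)) := by
    nlinarith [mul_nonneg (sub_nonneg.2 hlm.le) (by nlinarith : 0 ≤ 1 - m * l)]
  have h2 : a ≤ m * a' := by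
    have h3 : (1 - l * (m - l)) * a ≤ (1 - l * (m - l)) * (m * a') := by
      nlinarith [mul_le_mul_of_nonneg_right hlc ha']
    exact le_of_mul_le_mul_left h3 hc
  have h4 : l * b ≤ l * a := mul_le_mul_of_nonneg_left hab hl.le
  exact ⟨by nlinarith, h2⟩

/-- The comparison estimate for the scalar sequences of norms of the unstable and stable
components. -/
lemma scalar_two_point_estimate {κ κ₀ : ℝ} (h0 : 0 < κ) (h1 : κ < κ₀) {n₁ n₂ : ℤ}
    (a b : ℤ → ℝ) (ha : ∀ n, 0 ≤ a n)
    (hs : ∀ n, n₁ ≤ n → n < n₂ → b (n + 1) ≤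
      Real.exp (-κ₀) * b n + (Real.exp (-κ) - Real.exp (-κ₀)) * max (a n) (b n))
    (hu : ∀ n, n₁ ≤ n → n < n₂ → a n ≤
      Real.exp (-κ₀) * (a (n + 1) + (Real.exp (-κ) - Real.exp (-κ₀)) * max (a n) (b n)))
    (k : ℤ) (hk1 : n₁ ≤ k) (hk2 : k ≤ n₂) :
    max (a k) (b k) ≤ Real.exp (-κ * ((k - n₁ : ℤ) : ℝ)) * max (a n₁) (b n₁) +
      Real.exp (-κ * ((n₂ - k : ℤ) : ℝ)) * max (a n₂) (b n₂) := by
  have hl : 0 < Real.exp (-κ₀) := Real.exp_pos _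
  have hlm : Real.exp (-κ₀) < Real.exp (-κ) := Real.exp_lt_exp.2 (by linarith)
  have hm : Real.exp (-κ) < 1 := Real.exp_lt_one_iff.2 (by linarith)
  have step : ∀ n, n₁ ≤ n → n < n₂ → b n ≤ a n →
      b (n + 1) ≤ a (n + 1) ∧ a n ≤ Real.exp (-κ) * a (n + 1) := fun n h h' hab =>
    unstable_cone_step hl hlm hm (ha n) (ha (n + 1)) (hs n h h') (hu n h h') hab
  have hexp : ∀ p q : ℤ, Real.exp (-κ * ((p + 1 - q : ℤ) : ℝ)) =
      Real.exp (-κ * ((p - q : ℤ) : ℝ)) * Real.exp (-κ) := by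
    intro p q
    rw [← Real.exp_add]
    congr 1
    push_cast
    ring
  have hw : ∀ n, 0 ≤ max (a n) (b n) := fun n => le_max_of_le_left (ha n)
  rcases le_or_gt (b k) (a k) with hab | hab
  · have key : ∀ m, k ≤ m → m ≤ n₂ →
        b m ≤ a m ∧ a k ≤ Real.exp (-κ * ((m - k : ℤ) : ℝ)) * a m := by
      intro m hkm
      induction m, hkm using Int.leInduction with
      | base => intro _; simpa using hab
      | succ m hm' ih =>
        intro hm2
        obtain ⟨i1, i2⟩ := ih (by omega)
        obtain ⟨s1, s2⟩ := step m (by omega) (by omega) i1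
        refine ⟨s1, i2.trans ?_⟩
        rw [hexp, mul_assoc]
        exact mul_le_mul_of_nonneg_left s2 (Real.exp_pos _).le
    have h := (key n₂ hk2 le_rfl).2
    rw [max_eq_left hab]
    have h3 := mul_le_mul_of_nonneg_left (le_max_left (a n₂) (b n₂))
      (Real.exp_pos (-κ * ((n₂ - k : ℤ) : ℝ))).le
    have h4 := mul_nonneg (Real.exp_pos (-κ * ((k - n₁ : ℤ) : ℝ))).le (hw n₁)
    linarith
  · have key : ∀ m, n₁ ≤ m → m ≤ n₂ → a m < b m →
        b m ≤ Real.exp (-κ * ((m - n₁ : ℤ) : ℝ)) * max (a n₁) (b n₁) := by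
      intro m hkm
      induction m, hkm using Int.leInduction with
      | base => intro _ _; simp
      | succ m hm' ih =>
        intro hm2 hlt
        have hlt' : a m < b m := by
          by_contra hcon
          exact absurd (step m (by omega) (by omega) (not_lt.1 hcon)).1 (not_le.2 hlt)
        have i := ih (by omega) hlt'
        have s := hs m (by omega) (by omega)
        rw [max_eq_right hlt'.le] at s
        rw [hexp]
        nlinarith [mul_le_mul_of_nonneg_left i (Real.exp_pos (-κ)).le]
    have h := key k hk1 hk2 hab
    rw [max_eq_right hab.le]
    have h4 := mul_nonneg (Real.exp_pos (-κ * ((n₂ - k : ℤ) : ℝ))).le (hw n₂)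
    linarith

/-- **Shadowing for sequences of hyperbolic maps: exponential two-point comparison.**
On `E = ℝ^{d_u} × ℝ^{d_s}` with the max norm, for all `0 < κ < κ₀` there is `η₀ > 0` such
that for any finite block of block-hyperbolic linear maps `L_n = L_n^u × L_n^s` (with
`‖(L_n^u)⁻¹‖ ≤ e^{−κ₀}`, `‖L_n^s‖ ≤ e^{−κ₀}`) and maps `g_n` with `g_n − L_n` Lipschitz of
constant `η₀`, any two orbit segments `(y_n)`, `(z_n)` of `(g_n)` on `[n₁, n₂]` satisfy the
exponential comparison estimate at every intermediate time. -/
theorem shadowing_sequence_two_point_estimate (du ds : ℕ) (κ κ₀ : ℝ)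
    (h0 : 0 < κ) (h1 : κ < κ₀) :
    ∃ η₀ : ℝ, 0 < η₀ ∧
      ∀ n₁ n₂ : ℤ, n₁ ≤ n₂ →
      ∀ (Lu : ℤ → (EuclideanSpace ℝ (Fin du) →L[ℝ] EuclideanSpace ℝ (Fin du)))
        (Ls : ℤ → (EuclideanSpace ℝ (Fin ds) →L[ℝ] EuclideanSpace ℝ (Fin ds)))
        (g : ℤ → (EuclideanSpace ℝ (Fin du) × EuclideanSpace ℝ (Fin ds)) →
            (EuclideanSpace ℝ (Fin du) × EuclideanSpace ℝ (Fin ds))),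
        (∀ n, n₁ ≤ n → n < n₂ → Function.Bijective (Lu n)) →
        (∀ n, n₁ ≤ n → n < n₂ → ∀ u : EuclideanSpace ℝ (Fin du),
          ‖u‖ ≤ Real.exp (-κ₀) * ‖Lu n u‖) →
        (∀ n, n₁ ≤ n → n < n₂ → ‖Ls n‖ ≤ Real.exp (-κ₀)) →
        (∀ n, n₁ ≤ n → n < n₂ →
          ∀ x y : EuclideanSpace ℝ (Fin du) × EuclideanSpace ℝ (Fin ds),
          ‖(g n x - (ContinuousLinearMap.prodMap (Lu n) (Ls n)) x) -
            (g n y - (ContinuousLinearMap.prodMap (Lu n) (Ls n)) y)‖ ≤ η₀ * ‖x - y‖) →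
        ∀ y z : ℤ → EuclideanSpace ℝ (Fin du) × EuclideanSpace ℝ (Fin ds),
          (∀ n, n₁ ≤ n → n < n₂ → g n (y n) = y (n + 1)) →
          (∀ n, n₁ ≤ n → n < n₂ → g n (z n) = z (n + 1)) →
          ∀ k : ℤ, n₁ ≤ k → k ≤ n₂ →
            ‖z k - y k‖ ≤
              Real.exp (-κ * ((k - n₁ : ℤ) : ℝ)) * ‖z n₁ - y n₁‖ +
              Real.exp (-κ * ((n₂ - k : ℤ) : ℝ)) * ‖z n₂ - y n₂‖ := by
  refine ⟨Real.exp (-κ) - Real.exp (-κ₀), sub_pos.2 (Real.exp_lt_exp.2 (by linarith)), ?_⟩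
  intro n₁ n₂ _ Lu Ls g _ hLu hLs hg y z hy hz k hk1 hk2
  -- the increment of `g n - L n` between `y n` and `z n`, split into its two components
  have hinc : ∀ n, n₁ ≤ n → n < n₂ →
      ‖(z (n + 1) - y (n + 1)).1 - Lu n (z n - y n).1‖ ≤
        (Real.exp (-κ) - Real.exp (-κ₀)) * ‖z n - y n‖ ∧
      ‖(z (n + 1) - y (n + 1)).2 - Ls n (z n - y n).2‖ ≤
        (Real.exp (-κ) - Real.exp (-κ₀)) * ‖z n - y n‖ := by
    intro n h h'
    have hh := hg n h h' (z n) (y n)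
    rw [hy n h h', hz n h h'] at hh
    have e : (z (n + 1) - (ContinuousLinearMap.prodMap (Lu n) (Ls n)) (z n)) -
        (y (n + 1) - (ContinuousLinearMap.prodMap (Lu n) (Ls n)) (y n)) =
        ((z (n + 1) - y (n + 1)).1 - Lu n (z n - y n).1,
          (z (n + 1) - y (n + 1)).2 - Ls n (z n - y n).2) := by
      ext1
      · simp only [ContinuousLinearMap.coe_prodMap', Prod.fst_sub, Prod.map_fst, map_sub]
        abel
      · simp only [ContinuousLinearMap.coe_prodMap', Prod.snd_sub, Prod.map_snd, map_sub]
        abel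
    rw [e] at hh
    exact ⟨(norm_fst_le _).trans hh, (norm_snd_le _).trans hh⟩
  have hmain := scalar_two_point_estimate h0 h1 (n₁ := n₁) (n₂ := n₂)
    (fun n => ‖(z n - y n).1‖) (fun n => ‖(z n - y n).2‖)
    (fun _ => norm_nonneg _) ?_ ?_ k hk1 hk2
  · simpa only [← Prod.norm_def] using hmain
  · intro n h h'
    simp only [← Prod.norm_def]
    have t := norm_le_norm_add_norm_sub (Ls n (z n - y n).2) (z (n + 1) - y (n + 1)).2
    have t2 := (Ls n).le_of_opNorm_le (hLs n h h') (z n - y n).2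
    rw [norm_sub_rev] at t
    linarith [(hinc n h h').2]
  · intro n h h'
    simp only [← Prod.norm_def]
    have t := norm_le_norm_add_norm_sub (z (n + 1) - y (n + 1)).1 (Lu n (z n - y n).1)
    refine (hLu n h h' _).trans (mul_le_mul_of_nonneg_left ?_ (Real.exp_pos _).le)
    linarith [(hinc n h h').1]
end

section
/- Let 𝒜 be a finite set, σ the shift on 𝒜^ℤ, and Σ ⊆ 𝒜^ℤ a nonempty closed set with σ(Σ) = Σ. Let d ≥ 1 and let A : Σ → GL(d,ℝ) be continuous. For n ≥ 1 write A_n(x) = A(σ^{n−1}x)·⋯·A(σx)·A(x), and say that x, y ∈ Σ are on the same local stable set if x_i = y_i for all i ≥ 0. Assume there exist constants C > 0 and ε > 0 such that for all x, y ∈ Σ on the same local stable set and all n ≥ 0: ‖A_n(x)‖ · ‖A_n(x)⁻¹‖ · ‖A(σ^n x) − A(σ^n y)‖ < C·e^{−εn}. Then for all x, y ∈ Σ on the same local stable set, the limit H_s(x,y) := lim_{n→∞} A_n(y)⁻¹·A_n(x) exists and is an invertible matrix, and these limits satisfy: H_s(y,z)·H_s(x,y) = H_s(x,z) whenever x, y,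 z are pairwise on the same local stable set; H_s(σ(x), σ(y))·A(x) = A(y)·H_s(x,y) for all x, y on the same local stable set; and the map (x,y) ↦ H_s(x,y) is continuous on the set of pairs (x,y) ∈ Σ × Σ on the same local stable set. -/
/-!
Write `P_n(x,y) = A_n(y)⁻¹ A_n(x)`. Since `A_n(y)⁻¹ = P_n A_n(x)⁻¹`,
`P_{n+1} - P_n = P_n · A_n(x)⁻¹ · A(σⁿy)⁻¹ · (A(σⁿx) - A(σⁿy)) · A_n(x)`,
so with `K` a bound for `‖A⁻¹‖` on the compact set `Σ` the bunching condition gives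
`‖P_{n+1} - P_n‖ ≤ K C e^{-εn} ‖P_n‖` (`norm_holonomyApprox_succ_sub_le`). A discrete Gronwall
inequality (`norm_le_exp_sum_of_norm_sub_le`) bounds `‖P_n‖` uniformly, hence the increments are
dominated by a geometric series and `P_n` converges uniformly on the set of pairs on a common local
stable set (`tendstoUniformlyOn_holonomyApprox`). Continuity of the limit follows from continuity
of each `P_n`; the algebraic identities, and invertibility with inverse `H_s(y,x)`, follow by
passing to the limit in identities that hold for each `n`.
-/

/-- The left shift on bi-infinite sequences. -/
def seqShift {A : Type*} (x : ℤ → A) : ℤ → A := fun n => x (n + 1)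

/-- Two sequences lie on the same local stable set if they agree in all coordinates `i ≥ 0`. -/
def SameLocalStable {A : Type*} (x y : ℤ → A) : Prop := ∀ i : ℤ, 0 ≤ i → x i = y i

/-- The cocycle products `A_n(x) = A(σ^{n−1}x)·⋯·A(σx)·A(x)`. -/
noncomputable def cocycleProd {A : Type*} {d : ℕ}
    (Ac : (ℤ → A) → (EuclideanSpace ℝ (Fin d) →L[ℝ] EuclideanSpace ℝ (Fin d))) :
    ℕ → (ℤ → A) → (EuclideanSpace ℝ (Fin d) →L[ℝ] EuclideanSpace ℝ (Fin d))
  | 0, _ => 1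
  | n + 1, x => Ac (seqShift^[n] x) * cocycleProd Ac n x

/-- A discrete Gronwall inequality: relative increments bounded by `a n` give growth at most
`exp (∑ a)`. -/
lemma norm_le_exp_sum_of_norm_sub_le {E : Type*} [NormedAddCommGroup E] (P : ℕ → E) (a : ℕ → ℝ)
    (h : ∀ n, ‖P (n + 1) - P n‖ ≤ a n * ‖P n‖) (n : ℕ) :
    ‖P n‖ ≤ Real.exp (∑ k ∈ Finset.range n, a k) * ‖P 0‖ := by
  induction n with
  | zero => simp
  | succ n ih =>
    have h1 : ‖P (n + 1)‖ ≤ ‖P (n + 1) - P n‖ + ‖P n‖ := by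
      simpa using norm_add_le (P (n + 1) - P n) (P n)
    calc ‖P (n + 1)‖ ≤ (a n + 1) * ‖P n‖ := by linarith [h n]
      _ ≤ Real.exp (a n) * ‖P n‖ :=
        mul_le_mul_of_nonneg_right (Real.add_one_le_exp _) (norm_nonneg _)
      _ ≤ Real.exp (a n) * (Real.exp (∑ k ∈ Finset.range n, a k) * ‖P 0‖) := by gcongr
      _ = _ := by rw [Finset.sum_range_succ, Real.exp_add]; ring

lemma SameLocalStable.symm {A : Type*} {x y : ℤ → A} (h : SameLocalStable x y) :
    SameLocalStable y x := fun i hi => (h i hi).symm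

lemma SameLocalStable.seqShift {A : Type*} {x y : ℤ → A} (h : SameLocalStable x y) :
    SameLocalStable (seqShift x) (seqShift y) := fun i hi => h (i + 1) (by lia)

lemma continuous_seqShift {A : Type*} [TopologicalSpace A] :
    Continuous (seqShift : (ℤ → A) → ℤ → A) :=
  continuous_pi fun n => continuous_apply (n + 1)

section Cocycle

variable {A : Type*} {d : ℕ} {S : Set (ℤ → A)}
  {Ac : (ℤ → A) → (EuclideanSpace ℝ (Fin d) →L[ℝ] EuclideanSpace ℝ (Fin d))}

/-- The approximate holonomy `P_n(x,y) = A_n(y)⁻¹ A_n(x)`. -/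
noncomputable def holonomyApprox
    (Ac : (ℤ → A) → (EuclideanSpace ℝ (Fin d) →L[ℝ] EuclideanSpace ℝ (Fin d)))
    (n : ℕ) (x y : ℤ → A) : EuclideanSpace ℝ (Fin d) →L[ℝ] EuclideanSpace ℝ (Fin d) :=
  Ring.inverse (cocycleProd Ac n y) * cocycleProd Ac n x

/-- `cocycleProd` is defined by peeling off the last factor; this peels off the first one. -/
lemma cocycleProd_succ_eq (n : ℕ) (x : ℤ → A) :
    cocycleProd Ac (n + 1) x = cocycleProd Ac n (seqShift x) * Ac x := by
  induction n with
  | zero => simp [cocycleProd]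
  | succ n ih =>
    rw [cocycleProd, ih, cocycleProd, Function.iterate_succ_apply, mul_assoc]

lemma isUnit_cocycleProd (hmaps : Set.MapsTo seqShift S S) (hAunit : ∀ x ∈ S, IsUnit (Ac x))
    (n : ℕ) {x : ℤ → A} (hx : x ∈ S) : IsUnit (cocycleProd Ac n x) := by
  induction n with
  | zero => exact isUnit_one
  | succ n ih => exact (hAunit _ (hmaps.iterate n hx)).mul ih

lemma continuousOn_cocycleProd [TopologicalSpace A] (hmaps : Set.MapsTo seqShift S S)
    (hAcont : ContinuousOn Ac S) (n : ℕ) : ContinuousOn (cocycleProd Ac n) S := by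
  induction n with
  | zero => exact continuousOn_const
  | succ n ih =>
    exact (hAcont.comp (continuous_seqShift.iterate n).continuousOn (hmaps.iterate n)).mul ih

lemma continuousOn_holonomyApprox [TopologicalSpace A] (hmaps : Set.MapsTo seqShift S S)
    (hAcont : ContinuousOn Ac S) (hAunit : ∀ x ∈ S, IsUnit (Ac x)) (n : ℕ) :
    ContinuousOn (fun p : (ℤ → A) × (ℤ → A) => holonomyApprox Ac n p.1 p.2)
      {p | p.1 ∈ S ∧ p.2 ∈ S ∧ SameLocalStable p.1 p.2} := by
  have hc := continuousOn_cocycleProd hmaps hAcont n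
  refine ContinuousOn.mul ?_ (hc.comp continuousOn_fst fun p hp => hp.1)
  intro p hp
  obtain ⟨u, hu⟩ := isUnit_cocycleProd hmaps hAunit n hp.2.1
  have h1 : ContinuousAt Ring.inverse (cocycleProd Ac n p.2) :=
    hu ▸ NormedRing.inverse_continuousAt u
  exact h1.comp_continuousWithinAt (f := fun q : (ℤ → A) × (ℤ → A) => cocycleProd Ac n q.2)
    ((hc.comp continuousOn_snd fun p hp => hp.2.1) p hp)

lemma holonomyApprox_mul (hmaps : Set.MapsTo seqShift S S) (hAunit : ∀ x ∈ S, IsUnit (Ac x))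
    (n : ℕ) (x : ℤ → A) {y : ℤ → A} (hy : y ∈ S) (z : ℤ → A) :
    holonomyApprox Ac n y z * holonomyApprox Ac n x y = holonomyApprox Ac n x z := by
  have hu := isUnit_cocycleProd hmaps hAunit n hy
  simp only [holonomyApprox]
  rw [mul_assoc, Ring.mul_inverse_cancel_left _ _ hu]

lemma holonomyApprox_self (hmaps : Set.MapsTo seqShift S S) (hAunit : ∀ x ∈ S, IsUnit (Ac x))
    (n : ℕ) {x : ℤ → A} (hx : x ∈ S) : holonomyApprox Ac n x x = 1 :=
  Ring.inverse_mul_cancel _ (isUnit_cocycleProd hmaps hAunit n hx)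

lemma holonomyApprox_seqShift_mul (hmaps : Set.MapsTo seqShift S S)
    (hAunit : ∀ x ∈ S, IsUnit (Ac x)) (n : ℕ) (x : ℤ → A) {y : ℤ → A} (hy : y ∈ S) :
    holonomyApprox Ac n (seqShift x) (seqShift y) * Ac x =
      Ac y * holonomyApprox Ac (n + 1) x y := by
  have hu := isUnit_cocycleProd hmaps hAunit n (hmaps hy)
  simp only [holonomyApprox]
  rw [cocycleProd_succ_eq, cocycleProd_succ_eq, Ring.inverse_mul (Or.inl hu), mul_assoc,
    mul_assoc, Ring.mul_inverse_cancel_left _ _ (hAunit y hy)]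

/-- The key increment estimate; rewriting `A_n(y)⁻¹ = P_n A_n(x)⁻¹` makes only the conditioning
`‖A_n(x)‖ ‖A_n(x)⁻¹‖` at the point `x` appear. -/
lemma norm_holonomyApprox_succ_sub_le (hmaps : Set.MapsTo seqShift S S)
    (hAunit : ∀ x ∈ S, IsUnit (Ac x)) {K : ℝ} (hK : ∀ x ∈ S, ‖Ring.inverse (Ac x)‖ ≤ K)
    (n : ℕ) {x y : ℤ → A} (hx : x ∈ S) (hy : y ∈ S) :
    ‖holonomyApprox Ac (n + 1) x y - holonomyApprox Ac n x y‖ ≤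
      K * (‖cocycleProd Ac n x‖ * ‖Ring.inverse (cocycleProd Ac n x)‖ *
        ‖Ac (seqShift^[n] x) - Ac (seqShift^[n] y)‖) * ‖holonomyApprox Ac n x y‖ := by
  have hux := isUnit_cocycleProd hmaps hAunit n hx
  have hyn := hmaps.iterate n hy
  have huy := hAunit _ hyn
  have key : holonomyApprox Ac (n + 1) x y - holonomyApprox Ac n x y =
      holonomyApprox Ac n x y * Ring.inverse (cocycleProd Ac n x) *
        Ring.inverse (Ac (seqShift^[n] y)) *
        (Ac (seqShift^[n] x) - Ac (seqShift^[n] y)) * cocycleProd Ac n x := by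
    simp only [holonomyApprox, cocycleProd]
    rw [Ring.mul_inverse_cancel_right _ _ hux, Ring.inverse_mul (Or.inl huy), mul_sub, sub_mul,
      Ring.inverse_mul_cancel_right _ _ huy]
    simp only [mul_assoc]
  rw [key]
  have hK' := hK _ hyn
  calc _ ≤ ‖holonomyApprox Ac n x y‖ * ‖Ring.inverse (cocycleProd Ac n x)‖ *
        ‖Ring.inverse (Ac (seqShift^[n] y))‖ *
        ‖Ac (seqShift^[n] x) - Ac (seqShift^[n] y)‖ * ‖cocycleProd Ac n x‖ := by
        refine (norm_mul_le _ _).trans ?_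
        gcongr
        refine (norm_mul_le _ _).trans ?_
        gcongr
        refine (norm_mul_le _ _).trans ?_
        gcongr
        exact norm_mul_le _ _
    _ ≤ ‖holonomyApprox Ac n x y‖ * ‖Ring.inverse (cocycleProd Ac n x)‖ * K *
        ‖Ac (seqShift^[n] x) - Ac (seqShift^[n] y)‖ * ‖cocycleProd Ac n x‖ := by gcongr
    _ = _ := by ring

lemma tendstoUniformlyOn_holonomyApprox (hmaps : Set.MapsTo seqShift S S)
    (hAunit : ∀ x ∈ S, IsUnit (Ac x)) {K : ℝ} (hK0 : 0 ≤ K)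
    (hK : ∀ x ∈ S, ‖Ring.inverse (Ac x)‖ ≤ K)
    {C ε : ℝ} (hC : 0 < C) (hε : 0 < ε)
    (hbunch : ∀ x ∈ S, ∀ y ∈ S, SameLocalStable x y → ∀ n : ℕ,
      ‖cocycleProd Ac n x‖ * ‖Ring.inverse (cocycleProd Ac n x)‖ *
        ‖Ac (seqShift^[n] x) - Ac (seqShift^[n] y)‖ < C * Real.exp (-ε * n)) :
    ∃ H : (ℤ → A) × (ℤ → A) → (EuclideanSpace ℝ (Fin d) →L[ℝ] EuclideanSpace ℝ (Fin d)),
      TendstoUniformlyOn (fun n p => holonomyApprox Ac n p.1 p.2) H Filter.atTop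
        {p | p.1 ∈ S ∧ p.2 ∈ S ∧ SameLocalStable p.1 p.2} := by
  set a : ℕ → ℝ := fun n => K * (C * Real.exp (-ε * n)) with ha
  have ha0 : ∀ n, 0 ≤ a n := fun n => by positivity
  have hsum : Summable a := by
    have := Real.summable_exp_nat_mul_iff.2 (neg_lt_zero.2 hε)
    refine (Summable.mul_left C ?_).mul_left K
    simpa [mul_comm] using this
  set M := Real.exp (∑' n, a n) * ‖(1 : EuclideanSpace ℝ (Fin d) →L[ℝ] EuclideanSpace ℝ (Fin d))‖
    with hM
  have hincr : ∀ n, ∀ p ∈ {p : (ℤ → A) × (ℤ → A) | p.1 ∈ S ∧ p.2 ∈ S ∧ SameLocalStable p.1 p.2},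
      ‖holonomyApprox Ac (n + 1) p.1 p.2 - holonomyApprox Ac n p.1 p.2‖ ≤ a n * M := by
    rintro n ⟨x, y⟩ ⟨hx, hy, hxy⟩
    have hrel : ∀ k, ‖holonomyApprox Ac (k + 1) x y - holonomyApprox Ac k x y‖ ≤
        a k * ‖holonomyApprox Ac k x y‖ := fun k => by
      refine (norm_holonomyApprox_succ_sub_le hmaps hAunit hK k hx hy).trans ?_
      have := (hbunch x hx y hy hxy k).le
      simp only [ha]
      gcongr
    refine (hrel n).trans (mul_le_mul_of_nonneg_left ?_ (ha0 n))
    refine (norm_le_exp_sum_of_norm_sub_le (fun k => holonomyApprox Ac k x y) a hrel n).trans ?_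
    have h0 : holonomyApprox Ac 0 x y = 1 := by simp [holonomyApprox, cocycleProd]
    have := hsum.sum_le_tsum (Finset.range n) fun k _ => ha0 k
    simp only [h0, hM]
    gcongr
  have hunif := tendstoUniformlyOn_tsum_nat (hsum.mul_right M) hincr
  -- The increments telescope to `P_n - P_0 = P_n - 1`.
  refine ⟨fun p => 1 + ∑' n, (holonomyApprox Ac (n + 1) p.1 p.2 - holonomyApprox Ac n p.1 p.2), ?_⟩
  rw [Metric.tendstoUniformlyOn_iff] at hunif ⊢
  intro δ hδ
  filter_upwards [hunif δ hδ] with n hn p hp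
  have h := hn p hp
  rw [Finset.sum_range_sub (fun k => holonomyApprox Ac k p.1 p.2)] at h
  have h0 : holonomyApprox Ac 0 p.1 p.2 = 1 := by simp [holonomyApprox, cocycleProd]
  rw [h0, ← dist_add_left 1, add_sub_cancel] at h
  exact h

end Cocycle

/-- **Fiber bunching yields stable holonomies (Bonatti–Gómez-Mont–Viana).**
Let `Σ` be a subshift and `A : Σ → GL(d,ℝ)` a continuous cocycle satisfying the bunching
condition `‖A_n(x)‖·‖A_n(x)⁻¹‖·‖A(σⁿx) − A(σⁿy)‖ < C·e^{−εn}` along local stable sets.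
Then the stable holonomies `H_s(x,y) = lim_n A_n(y)⁻¹·A_n(x)` exist, are invertible,
satisfy the cocycle identities `H_s(y,z)∘H_s(x,y) = H_s(x,z)` and
`H_s(σx,σy)∘A(x) = A(y)∘H_s(x,y)`, and depend continuously on `(x,y)`. -/
theorem stable_holonomies_of_fiber_bunched_cocycle
    {A : Type*} [Fintype A] [TopologicalSpace A] [DiscreteTopology A]
    (S : Set (ℤ → A)) (hSne : S.Nonempty) (hScl : IsClosed S)
    (hSinv : seqShift '' S = S)
    (d : ℕ) (hd : 1 ≤ d)
    (Ac : (ℤ → A) → (EuclideanSpace ℝ (Fin d) →L[ℝ] EuclideanSpace ℝ (Fin d)))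
    (hAcont : ContinuousOn Ac S)
    (hAunit : ∀ x ∈ S, IsUnit (Ac x))
    (C ε : ℝ) (hC : 0 < C) (hε : 0 < ε)
    (hbunch : ∀ x ∈ S, ∀ y ∈ S, SameLocalStable x y → ∀ n : ℕ,
      ‖cocycleProd Ac n x‖ * ‖Ring.inverse (cocycleProd Ac n x)‖ *
        ‖Ac (seqShift^[n] x) - Ac (seqShift^[n] y)‖ < C * Real.exp (-ε * n)) :
    ∃ Hs : (ℤ → A) → (ℤ → A) →
        (EuclideanSpace ℝ (Fin d) →L[ℝ] EuclideanSpace ℝ (Fin d)),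
      (∀ x ∈ S, ∀ y ∈ S, SameLocalStable x y →
        Filter.Tendsto
          (fun n => Ring.inverse (cocycleProd Ac n y) * cocycleProd Ac n x)
          Filter.atTop (nhds (Hs x y)) ∧ IsUnit (Hs x y)) ∧
      (∀ x ∈ S, ∀ y ∈ S, ∀ z ∈ S,
        SameLocalStable x y → SameLocalStable y z → SameLocalStable x z →
        Hs y z * Hs x y = Hs x z) ∧
      (∀ x ∈ S, ∀ y ∈ S, SameLocalStable x y →
        Hs (seqShift x) (seqShift y) * Ac x = Ac y * Hs x y) ∧
      ContinuousOn (fun p : (ℤ → A) × (ℤ → A) => Hs p.1 p.2)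
        {p | p.1 ∈ S ∧ p.2 ∈ S ∧ SameLocalStable p.1 p.2} := by
  have hmaps : Set.MapsTo seqShift S S := fun x hx => hSinv ▸ Set.mem_image_of_mem _ hx
  obtain ⟨K, hK⟩ : ∃ K, ∀ x ∈ S, ‖Ring.inverse (Ac x)‖ ≤ K := by
    refine hScl.isCompact.exists_bound_of_continuousOn fun x hx => ?_
    obtain ⟨u, hu⟩ := hAunit x hx
    have h1 : ContinuousAt Ring.inverse (Ac x) := hu ▸ NormedRing.inverse_continuousAt u
    exact h1.comp_continuousWithinAt (hAcont x hx)
  have hK0 : 0 ≤ K := by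
    obtain ⟨x, hx⟩ := hSne
    exact (norm_nonneg _).trans (hK x hx)
  obtain ⟨H, hH⟩ := tendstoUniformlyOn_holonomyApprox hmaps hAunit hK0 hK hC hε hbunch
  have hlim : ∀ x ∈ S, ∀ y ∈ S, SameLocalStable x y →
      Filter.Tendsto (fun n => holonomyApprox Ac n x y) Filter.atTop (nhds (H (x, y))) :=
    fun x hx y hy hxy => hH.tendsto_at (x := (x, y)) ⟨hx, hy, hxy⟩
  have hcomp : ∀ x ∈ S, ∀ y ∈ S, ∀ z ∈ S,
      SameLocalStable x y → SameLocalStable y z → SameLocalStable x z →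
      H (y, z) * H (x, y) = H (x, z) := fun x hx y hy z hz hxy hyz hxz => by
    refine tendsto_nhds_unique ((hlim y hy z hz hyz).mul (hlim x hx y hy hxy)) ?_
    simpa only [holonomyApprox_mul hmaps hAunit _ x hy z] using hlim x hx z hz hxz
  have hself : ∀ x ∈ S, H (x, x) = 1 := fun x hx => by
    refine tendsto_nhds_unique (hlim x hx x hx fun _ _ => rfl) ?_
    simpa only [holonomyApprox_self hmaps hAunit _ hx] using tendsto_const_nhds
  refine ⟨fun x y => H (x, y), fun x hx y hy hxy => ⟨hlim x hx y hy hxy, ?_⟩, hcomp, ?_, ?_⟩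
  · have h1 := hcomp x hx y hy x hx hxy hxy.symm fun _ _ => rfl
    have h2 := hcomp y hy x hx y hy hxy.symm hxy fun _ _ => rfl
    rw [hself x hx] at h1
    rw [hself y hy] at h2
    exact ⟨⟨H (x, y), H (y, x), h2, h1⟩, rfl⟩
  · intro x hx y hy hxy
    refine tendsto_nhds_unique
      ((hlim _ (hmaps hx) _ (hmaps hy) hxy.seqShift).mul_const (Ac x)) ?_
    simp only [holonomyApprox_seqShift_mul hmaps hAunit _ x hy]
    exact ((hlim x hx y hy hxy).comp (Filter.tendsto_add_atTop_nat 1)).const_mul (Ac y)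
  · exact hH.continuousOn
      (Filter.Frequently.of_forall fun n => continuousOn_holonomyApprox hmaps hAcont hAunit n)
end

section
/- Let (M, dist) be a compact metric space, f : M → M a homeomorphism, and μ an ergodic f-invariant Borel probability measure. Let ψ₁, …, ψ_k : M → ℝ be continuous functions, let γ > 0, δ > 0, ε > 0, let X ⊆ M be compact with μ(X) > 0, and let ρ > 0 be such that dist(x,y) < ρ implies |ψ_i(x) − ψ_i(y)| < γ/2 for every i. Suppose there exist h ≥ 0, ξ > 0 with ξ·(h + 4) < δ, and N₀ ∈ ℕ such that for every n ≥ N₀ and every Borel set Z ⊆ X with μ(Z) ≥ μ(X)/2 there exists a finite subset S ⊆ Z of cardinality at least e^{n(h−ξ)} whose points are (n,ρ)-separated. Then there exist an integer N ≥ N₀, a point p ∈ X, and a finite set Y ⊆ X ∩ B(p, ε/2) such that: (i) distinct points of Y are (N,ρ)-separated; (ii) f^N(Y) ⊆ X ∩ B(p, ε/2); (iii) for every y ∈ Y and every i ∈ {1,…,k}, |(1/N)·Σ_{j=1}^{N} ψ_i(f^j(y)) − ∫_M ψ_i dμ| < γ/2; and (iv) the cardinality of Y is at least e^{N(h − δ)}.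 -/
open MeasureTheory

/-!
The proof needs only convergence in measure of Birkhoff averages, so von Neumann's mean ergodic
theorem suffices and no pointwise ergodic theorem is used.

For an ergodic map the fixed vectors of the Koopman operator on `L²` are the constants, so Birkhoff
averages of a square-integrable `φ` converge to `∫ φ` in `L²`, hence in measure
(`tendsto_measure_birkhoffAverage`).

Cover `X` by finitely many sets `Q p = X ∩ B(p, ε/2)` with `p ∈ X`. Fix a large integer `L`, put
`n = L * m`, and consider the time window `[n, n + m)`. For large `m`, outside a set of measure at
most `μ(X)/2`, the averages of the `ψ i ∘ f` at time `n`, and of the indicators of the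
non-null `Q p` at times `n` and `n + m`, are close to their integrals. For such points of `X`:

* the number of visits to a non-null `Q p` before time `n + m` exceeds the number before time `n`,
  so the point returns to its own `Q p` at some time `N` in the window (`exists_visit`);
* the averages of the `ψ i ∘ f` remain close to the integrals at all times of the window, which is
  short compared with `n` (`birkhoffAverage_window`).

The hypothesis yields an `(n, ρ)`-separated set of at least `e^{n(h-ξ)}` such points. The pairs
`(p, N)` number at most `m` times a constant, which is at most `e^{3ξn}`, so by the pigeonhole
principle some pair is shared by at least `e^{n(h-4ξ)} ≥ e^{N(h-δ)}` of them (`exponent_le`).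
-/

open Filter Topology

/-! ### Convergence in measure of Birkhoff averages -/

/-- Birkhoff sums of the Koopman operator along the class of `φ` in `L²` are the classes of the
pointwise Birkhoff sums of `φ`. -/
theorem koopman_birkhoffSum {M : Type*} [MeasurableSpace M] {μ : Measure M} {f : M → M}
    (hf : MeasurePreserving f μ μ) {φ : M → ℝ} (hφ : MemLp φ 2 μ) (n : ℕ) :
    ∃ hm : MemLp (birkhoffSum f φ n) 2 μ,
      birkhoffSum (Lp.compMeasurePreservingₗᵢ ℝ f hf : Lp ℝ 2 μ → Lp ℝ 2 μ) id n (hφ.toLp φ)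
        = hm.toLp _ := by
  have hiter : ∀ n : ℕ, (Lp.compMeasurePreservingₗᵢ ℝ f hf : Lp ℝ 2 μ → Lp ℝ 2 μ)^[n] (hφ.toLp φ)
      = (hφ.comp_measurePreserving (hf.iterate n)).toLp _ := by
    intro n
    have := Lp.compMeasurePreserving_iterate (E := ℝ) (p := 2) hf n
    exact congrFun this (hφ.toLp φ)
  induction n with
  | zero =>
    refine ⟨by simp [birkhoffSum_zero'], ?_⟩
    simp [birkhoffSum_zero']
  | succ n ih =>
    obtain ⟨hm, h⟩ := ih
    have hfun : birkhoffSum f φ (n + 1) = birkhoffSum f φ n + φ ∘ f^[n] :=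
      funext fun x => birkhoffSum_succ f φ n x
    have hs := hm.add (hφ.comp_measurePreserving (hf.iterate n))
    refine ⟨hfun ▸ hs, ?_⟩
    rw [birkhoffSum_succ, h, id, hiter, ← MemLp.toLp_add]
    simp only [hfun]

/-- The mean ergodic theorem in the form of convergence in measure. -/
theorem tendsto_measure_birkhoffAverage {M : Type*} [MeasurableSpace M] {μ : Measure M}
    [IsProbabilityMeasure μ] {f : M → M} (hf : Ergodic f μ) {φ : M → ℝ} (hφ : MemLp φ 2 μ)
    {η : ℝ} (hη : 0 < η) :
    Tendsto (fun n : ℕ => μ {x | η ≤ |birkhoffAverage ℝ f φ n x - ∫ y, φ y ∂μ|}) atTop (𝓝 0) := by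
  have hmp := hf.toMeasurePreserving
  set U := (Lp.compMeasurePreservingₗᵢ ℝ f hmp : Lp ℝ 2 μ →ₗᵢ[ℝ] Lp ℝ 2 μ) with hU
  have hconv := U.toContinuousLinearMap.tendsto_birkhoffAverage_orthogonalProjection
    U.norm_toContinuousLinearMap_le (hφ.toLp φ)
  set K := U.toContinuousLinearMap.eqLocus (1 : Lp ℝ 2 μ →L[ℝ] Lp ℝ 2 μ)
  have hc := memLp_const (μ := μ) (p := 2) (∫ y, φ y ∂μ)
  -- Invariant `L²` functions are constant by ergodicity, so `hφ.toLp φ - ∫ φ` is orthogonal to them.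
  have hproj : ((K.orthogonalProjectionOnto (hφ.toLp φ) : K) : Lp ℝ 2 μ) = hc.toLp _ := by
    refine Submodule.eq_starProjection_of_mem_of_inner_eq_zero (K := K) ?_ fun w hw => ?_
    · change U (hc.toLp _) = hc.toLp _
      rfl
    · have hw' : U w = w := hw
      have hwinv : (w : M → ℝ) ∘ f =ᵐ[μ] w := by
        have := Lp.coeFn_compMeasurePreserving w hmp
        refine this.symm.trans ?_
        change (U w : M → ℝ) =ᵐ[μ] w
        rw [hw']
      obtain ⟨c, hwc⟩ := hf.ae_eq_const_of_ae_eq_comp_ae (Lp.aestronglyMeasurable w) hwinv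
      rw [← MemLp.toLp_sub, L2.inner_def]
      have : ∫ a, inner ℝ (((hφ.sub hc).toLp _ : Lp ℝ 2 μ) a) ((w : M → ℝ) a) ∂μ
          = ∫ a, (φ a - ∫ y, φ y ∂μ) * c ∂μ := by
        refine integral_congr_ae ?_
        filter_upwards [(hφ.sub hc).coeFn_toLp, hwc] with a h1 h2
        rw [h1, h2]; simp [mul_comm]
      rw [this, integral_mul_const, integral_sub (hφ.integrable (by norm_num)) (integrable_const _)]
      simp
  rw [hproj] at hconv
  have havg : ∀ n : ℕ, ∃ hm : MemLp (birkhoffAverage ℝ f φ n) 2 μ,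
      birkhoffAverage ℝ U.toContinuousLinearMap id n (hφ.toLp φ) = hm.toLp _ := by
    intro n
    obtain ⟨hm, h⟩ := koopman_birkhoffSum hmp hφ n
    refine ⟨hm.const_smul ((n : ℝ)⁻¹), ?_⟩
    rw [birkhoffAverage]
    exact (congrArg _ h).trans (MemLp.toLp_const_smul _ hm).symm
  choose hm hmeq using havg
  simp only [hmeq] at hconv
  have := tendstoInMeasure_of_tendsto_Lp hconv
  have := this.congr (fun n => (hm n).coeFn_toLp) hc.coeFn_toLp
  exact tendstoInMeasure_iff_norm.1 this η hη

theorem tendsto_measure_iUnion_birkhoffAverage {M : Type*} [MeasurableSpace M] {μ : Measure M}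
    [IsProbabilityMeasure μ] {f : M → M} (hf : Ergodic f μ) {ι : Type*} [Finite ι]
    {φ : ι → M → ℝ} (hφ : ∀ i, MemLp (φ i) 2 μ) {η : ι → ℝ} (hη : ∀ i, 0 < η i) :
    Tendsto (fun n : ℕ => μ (⋃ i, {x | η i ≤ |birkhoffAverage ℝ f (φ i) n x - ∫ y, φ i y ∂μ|}))
      atTop (𝓝 0) := by
  have := Fintype.ofFinite ι
  refine tendsto_of_tendsto_of_tendsto_of_le_of_le tendsto_const_nhds ?_ (fun _ => zero_le)
    (fun n => measure_iUnion_fintype_le μ _)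
  simpa using tendsto_finsetSum Finset.univ
    (fun i _ => tendsto_measure_birkhoffAverage hf (hφ i) (hη i))

/-! ### Estimates on the time window -/

/-- If the visit frequencies of the orbit of `x` to `Q` at times `L * m` and `L * m + m` are both
within `q / (2 * L + 1)` of `q`, the orbit visits `Q` between these two times. -/
theorem exists_visit {M : Type*} {f : M → M} {Q : Set M} {x : M} {L m : ℕ} (hm : 0 < m)
    {q η : ℝ} (hη : (2 * L + 1) * η ≤ q) (hL : 0 < L)
    (h1 : |birkhoffAverage ℝ f (Q.indicator 1) (L * m) x - q| < η)
    (h2 : |birkhoffAverage ℝ f (Q.indicator 1) (L * m + m) x - q| < η) :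
    ∃ N, L * m ≤ N ∧ N < L * m + m ∧ f^[N] x ∈ Q := by
  by_contra! hno
  have hsum : birkhoffSum f (Q.indicator (1 : M → ℝ)) (L * m + m) x
      = birkhoffSum f (Q.indicator (1 : M → ℝ)) (L * m) x := by
    unfold birkhoffSum
    rw [Finset.sum_range_add, add_eq_left]
    refine Finset.sum_eq_zero fun j hj => ?_
    have := Finset.mem_range.1 hj
    exact Set.indicator_of_notMem (hno _ (by omega) (by omega)) _
  simp only [birkhoffAverage, hsum, smul_eq_mul] at h1 h2
  set S := birkhoffSum f (Q.indicator (1 : M → ℝ)) (L * m) x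
  have hn : (0 : ℝ) < (L * m : ℕ) := by exact_mod_cast Nat.mul_pos hL hm
  have hn' : (0 : ℝ) < (L * m + m : ℕ) := by positivity
  have e1 : S < (q + η) * (L * m : ℕ) := by
    have := (abs_lt.1 h1).2
    rw [inv_mul_eq_div, sub_lt_iff_lt_add', div_lt_iff₀ hn] at this
    exact this
  have e2 : (q - η) * (L * m + m : ℕ) < S := by
    have := (abs_lt.1 h2).1
    rw [inv_mul_eq_div, lt_sub_iff_add_lt', lt_div_iff₀ hn'] at this
    linarith
  push_cast at e1 e2
  have hm' : (0 : ℝ) < m := by exact_mod_cast hm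
  nlinarith [mul_le_mul_of_nonneg_right hη hm'.le]

/-- Lengthening an orbit segment of length `L * m` by at most `m` steps increases the distance of
the Birkhoff average from `I` by at most `2 * C / L ≤ γ / 4`. -/
theorem birkhoffAverage_window {M : Type*} {f : M → M} {φ : M → ℝ} {x : M} {L m N : ℕ}
    {C I γ : ℝ} (hγ : 0 < γ) (hn : 0 < L * m) (hN : L * m ≤ N) (hN' : N ≤ L * m + m)
    (hφ : ∀ y, |φ y| ≤ C) (hI : |I| ≤ C) (hL : 8 * C ≤ γ * L)
    (h1 : |birkhoffAverage ℝ f φ (L * m) x - I| < γ / 4) :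
    |birkhoffAverage ℝ f φ N x - I| < γ / 2 := by
  obtain ⟨d, rfl⟩ := Nat.exists_eq_add_of_le hN
  have hd : (d : ℝ) ≤ m := by exact_mod_cast (by omega : d ≤ m)
  have hn0 : (0 : ℝ) < (L * m : ℕ) := by exact_mod_cast hn
  have hN0 : (0 : ℝ) < (L * m + d : ℕ) := by push_cast at hn0 ⊢; positivity
  have key : ∀ n : ℕ, (0 : ℝ) < n →
      |birkhoffAverage ℝ f φ n x - I| = |birkhoffSum f φ n x - n * I| / n := by
    intro n hn
    rw [birkhoffAverage, smul_eq_mul, ← abs_of_pos hn, ← abs_div, abs_of_pos hn]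
    congr 1
    field_simp
  rw [key _ hn0, div_lt_iff₀ hn0] at h1
  rw [key _ hN0, div_lt_iff₀ hN0]
  have htail : |∑ j ∈ Finset.range d, (φ (f^[L * m + j] x) - I)| ≤ d * (2 * C) := by
    refine (Finset.abs_sum_le_sum_abs _ _).trans ?_
    have : ∑ j ∈ Finset.range d, |φ (f^[L * m + j] x) - I| ≤ ∑ j ∈ Finset.range d, (2 * C) :=
      Finset.sum_le_sum fun j _ => (abs_sub _ _).trans (by linarith [hφ (f^[L * m + j] x)])
    simpa using this
  have hsplit : birkhoffSum f φ (L * m + d) x - (L * m + d : ℕ) * I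
      = (birkhoffSum f φ (L * m) x - (L * m : ℕ) * I)
        + ∑ j ∈ Finset.range d, (φ (f^[L * m + j] x) - I) := by
    unfold birkhoffSum
    rw [Finset.sum_range_add, Finset.sum_sub_distrib]
    push_cast
    simp
    ring
  rw [hsplit]
  refine (abs_add_le _ _).trans_lt ?_
  have hC : 0 ≤ C := (abs_nonneg _).trans hI
  have hdC : d * (2 * C) ≤ m * (2 * C) := by gcongr
  have hmL : (m : ℝ) * (8 * C) ≤ m * (γ * L) := by gcongr
  have hdγ : 0 ≤ d * γ := by positivity
  push_cast at h1 ⊢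
  nlinarith

theorem eventually_mul_le_exp (r : ℝ) {a : ℝ} (ha : 0 < a) :
    ∀ᶠ m : ℕ in atTop, r * m ≤ Real.exp (a * m) := by
  have h := ((isLittleO_pow_exp_pos_mul_atTop 1 ha).comp_tendsto
    tendsto_natCast_atTop_atTop).const_mul_left r |>.bound one_pos
  filter_upwards [h] with m hm
  simp only [Function.comp_apply, pow_one, norm_mul, Real.norm_eq_abs, Nat.abs_cast,
    Real.abs_exp, one_mul] at hm
  exact (mul_le_mul_of_nonneg_right (le_abs_self r) (Nat.cast_nonneg m)).trans hm

/-- The margin `ξ * (h + 4) < δ` absorbs both the passage from time `n` to a return time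
`N ≤ (1 + ξ) * n` and the loss of `3 * ξ * n` in the pigeonhole step. -/
theorem exponent_le {h δ ξ n m N : ℝ} (hh : 0 ≤ h) (hξ : 0 < ξ) (hξδ : ξ * (h + 4) < δ)
    (hn : 0 ≤ n) (hm : m ≤ ξ * n) (hN : n ≤ N) (hN' : N ≤ n + m) :
    N * (h - δ) ≤ n * (h - 4 * ξ) := by
  rcases le_total 0 (h - δ) with h0 | h0
  · have : N * (h - δ) ≤ (n + ξ * n) * (h - δ) := by gcongr; linarith
    nlinarith [mul_nonneg hn hξ.le, mul_nonneg (mul_nonneg hn hξ.le) hh, mul_pos hξ (by nlinarith : 0 < δ)]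
  · nlinarith [mul_nonneg hξ.le hh, mul_nonneg hn (mul_nonneg hξ.le hh)]

/-! ### The selection lemma -/

/-- **Selection lemma in the proof of Katok's horseshoe theorem.**  For a homeomorphism `f`
of a compact metric space with an ergodic invariant measure `μ`, given test functions
`ψ₁,…,ψ_k`, constants `γ, δ, ε > 0`, a compact set `X` of positive measure, a separation
scale `ρ` adapted to the `ψ_i`, and an entropy-type hypothesis producing `(n,ρ)`-separated
sets of cardinality `≥ e^{n(h−ξ)}` inside any half-measure subset of `X`, one finds a time
`N ≥ N₀`, a point `p ∈ X` and an `(N,ρ)`-separated set `Y ⊆ X ∩ B(p,ε/2)` of cardinality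
`≥ e^{N(h−δ)}` that returns to `X ∩ B(p,ε/2)` at time `N` and whose Birkhoff averages over
`[1,N]` are `γ/2`-close to the space averages. -/
theorem katok_selection_of_separated_returning_set
    {M : Type*} [MetricSpace M] [CompactSpace M] [MeasurableSpace M] [BorelSpace M]
    (f : M ≃ₜ M) (μ : Measure M) [IsProbabilityMeasure μ]
    (hinv : ∀ A : Set M, MeasurableSet A → μ (⇑f ⁻¹' A) = μ A)
    (herg : Ergodic (⇑f) μ)
    (k : ℕ) (ψ : Fin k → M → ℝ) (hψ : ∀ i, Continuous (ψ i))
    (γ δ ε : ℝ) (hγ : 0 < γ) (hδ : 0 < δ) (hε : 0 < ε)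
    (X : Set M) (hXcomp : IsCompact X) (hXpos : 0 < μ X)
    (ρ : ℝ) (hρ : 0 < ρ)
    (hρψ : ∀ x y : M, dist x y < ρ → ∀ i, |ψ i x - ψ i y| < γ / 2)
    (h ξ : ℝ) (hh : 0 ≤ h) (hξ : 0 < ξ) (hξδ : ξ * (h + 4) < δ)
    (N₀ : ℕ)
    (hsep : ∀ n : ℕ, N₀ ≤ n → ∀ Z : Set M, Z ⊆ X → MeasurableSet Z →
      μ X / 2 ≤ μ Z →
      ∃ Sfin : Finset M, ↑Sfin ⊆ Z ∧
        Real.exp (n * (h - ξ)) ≤ (Sfin.card : ℝ) ∧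
        ∀ x ∈ Sfin, ∀ y ∈ Sfin, x ≠ y →
          ∃ j : ℕ, j < n ∧ ρ < dist ((⇑f)^[j] x) ((⇑f)^[j] y)) :
    ∃ N : ℕ, N₀ ≤ N ∧ ∃ p ∈ X, ∃ Y : Finset M,
      (↑Y ⊆ X ∩ Metric.ball p (ε / 2)) ∧
      (∀ x ∈ Y, ∀ y ∈ Y, x ≠ y →
        ∃ j : ℕ, j < N ∧ ρ < dist ((⇑f)^[j] x) ((⇑f)^[j] y)) ∧
      (∀ y ∈ Y, (⇑f)^[N] y ∈ X ∩ Metric.ball p (ε / 2)) ∧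
      (∀ y ∈ Y, ∀ i : Fin k,
        |(1 / N : ℝ) * ∑ j ∈ Finset.range N, ψ i ((⇑f)^[j + 1] y) - ∫ x, ψ i x ∂μ|
          < γ / 2) ∧
      Real.exp (N * (h - δ)) ≤ (Y.card : ℝ) := by
  classical
  have hXm : MeasurableSet X := hXcomp.isClosed.measurableSet
  have hmp : MeasurePreserving (⇑f) μ μ := herg.toMeasurePreserving
  have hint : ∀ i, ∫ x, ψ i (f x) ∂μ = ∫ x, ψ i x ∂μ := fun i =>
    hmp.integral_comp f.measurableEmbedding (ψ i)
  obtain ⟨C, hC⟩ : ∃ C : ℝ, ∀ i y, |ψ i y| ≤ C := by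
    have : ∀ i, ∃ C : ℝ, ∀ y, |ψ i y| ≤ C := fun i => by
      obtain ⟨C, hC⟩ := isCompact_univ.exists_bound_of_continuousOn (hψ i).continuousOn
      exact ⟨C, fun y => hC y trivial⟩
    choose D hD using this
    obtain ⟨C, hC⟩ := Set.finite_range D |>.bddAbove
    exact ⟨C, fun i y => (hD i y).trans (hC ⟨i, rfl⟩)⟩
  have hI : ∀ i, |∫ x, ψ i (f x) ∂μ| ≤ C := fun i => by
    simpa using norm_integral_le_of_norm_le_const (μ := μ) (f := fun y => ψ i (f y))
      (Eventually.of_forall fun y => hC i (f y))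
  -- `L` is large enough that a window of length `m` after time `L * m` is a fraction `≤ ξ` of
  -- the orbit segment and perturbs the averages by at most `γ / 4`.
  obtain ⟨L, hL0, hLξ, hLC⟩ : ∃ L : ℕ, 0 < L ∧ 1 ≤ ξ * L ∧ 8 * C ≤ γ * L := by
    have h1 := (tendsto_natCast_atTop_atTop (R := ℝ)).const_mul_atTop hξ
    have h2 := (tendsto_natCast_atTop_atTop (R := ℝ)).const_mul_atTop hγ
    exact ((eventually_gt_atTop 0).and
      ((h1.eventually_ge_atTop 1).and (h2.eventually_ge_atTop (8 * C)))).exists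
  obtain ⟨t, htX, hcov⟩ : ∃ t : Finset M, (∀ p ∈ t, p ∈ X) ∧
      X ⊆ ⋃ p ∈ t, Metric.ball p (ε / 2) :=
    hXcomp.elim_nhds_subcover _ fun p _ => Metric.ball_mem_nhds p (half_pos hε)
  let Q : M → Set M := fun p => X ∩ Metric.ball p (ε / 2)
  have hQm : ∀ p, MeasurableSet (Q p) := fun p => hXm.inter Metric.isOpen_ball.measurableSet
  -- Only the non-null pieces are tested: the tolerance for visits to `Q p` must be positive.
  let J := {p : M // p ∈ t.filter fun p => μ (Q p) ≠ 0}
  let φ : Fin k ⊕ J → M → ℝ :=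
    Sum.elim (fun i => ψ i ∘ f) (fun p => (Q p.1).indicator 1)
  let η : Fin k ⊕ J → ℝ :=
    Sum.elim (fun _ => γ / 4) (fun p => μ.real (Q p.1) / (2 * L + 1))
  have hφm : ∀ i, Measurable (φ i) := by
    rintro (i | p)
    · exact ((hψ i).comp f.continuous).measurable
    · exact measurable_one.indicator (hQm p.1)
  have hφ : ∀ i, MemLp (φ i) 2 μ := by
    rintro (i | p)
    · exact MemLp.of_bound (hφm (Sum.inl i)).aestronglyMeasurable C
        (Eventually.of_forall fun y => hC i (f y))
    · exact (memLp_const (1 : ℝ)).indicator (hQm p.1)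
  have hJ : ∀ p : J, 0 < μ.real (Q p.1) := fun p =>
    ENNReal.toReal_pos (Finset.mem_filter.1 p.2).2 (measure_ne_top _ _)
  have hη : ∀ i, 0 < η i := by
    rintro (i | p)
    · exact div_pos hγ (by norm_num)
    · exact div_pos (hJ p) (by positivity)
  -- `B n` is the set of points where some tested average at time `n` is off by its tolerance.
  let B : ℕ → Set M := fun n =>
    ⋃ i, {x | η i ≤ |birkhoffAverage ℝ f (φ i) n x - ∫ y, φ i y ∂μ|}
  have hBm : ∀ n, MeasurableSet (B n) := fun n => by
    refine MeasurableSet.iUnion fun i => measurableSet_le measurable_const ?_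
    have : Measurable (birkhoffAverage ℝ f (φ i) n) := by
      unfold birkhoffAverage birkhoffSum
      refine Measurable.fun_const_smul ?_ _
      exact Finset.measurable_fun_sum _ fun j _ =>
        (hφm i).comp (f.continuous.measurable.iterate j)
    exact (this.sub_const _).abs
  have hB : Tendsto (fun n => μ (B n)) atTop (𝓝 0) :=
    tendsto_measure_iUnion_birkhoffAverage herg hφ hη
  have hquarter : 0 < μ X / 4 := ENNReal.div_pos hXpos.ne' (by norm_num)
  have hBev := hB.eventually (gt_mem_nhds hquarter)
  have hLm : Tendsto (fun m : ℕ => L * m) atTop atTop :=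
    tendsto_id.const_mul_atTop' hL0
  have hLm' : Tendsto (fun m : ℕ => L * m + m) atTop atTop :=
    tendsto_atTop_mono (fun _ => Nat.le_add_right _ _) hLm
  obtain ⟨m, hm0, hmN₀, hB1, hB2, hexp⟩ := ((eventually_gt_atTop 0).and
    ((hLm.eventually_ge_atTop N₀).and ((hLm.eventually hBev).and ((hLm'.eventually hBev).and
      (eventually_mul_le_exp t.card (a := 3 * ξ * L) (by positivity)))))).exists
  set n := L * m with hn
  have hn0 : 0 < n := Nat.mul_pos hL0 hm0
  let Nul : Set M := ⋃ p ∈ t.filter fun p => μ (Q p) = 0, Q p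
  have hNul : μ Nul = 0 :=
    (measure_biUnion_null_iff (Finset.countable_toSet _)).2 fun p hp => (Finset.mem_filter.1 hp).2
  have hNulm : MeasurableSet Nul := Finset.measurableSet_biUnion _ fun p _ => hQm p
  let Z : Set M := X \ (B n ∪ B (n + m) ∪ Nul)
  have hZμ : μ X / 2 ≤ μ Z := by
    have hbad : μ (B n ∪ B (n + m) ∪ Nul) ≤ μ X / 2 := calc
      _ ≤ μ (B n) + μ (B (n + m)) + μ Nul :=
        (measure_union_le _ _).trans (add_le_add_left (measure_union_le _ _) _)
      _ ≤ μ X / 4 + μ X / 4 + 0 := by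
        rw [hNul]; gcongr
      _ = μ X / 2 := by
        rw [add_zero, ← two_mul, div_eq_mul_inv, div_eq_mul_inv, mul_left_comm]
        congr 1
        rw [← ENNReal.toReal_eq_toReal_iff' (by finiteness) (by finiteness)]
        norm_num
    have h1 : μ X ≤ μ Z + μ X / 2 := by
      refine (measure_le_inter_add_sdiff μ X (B n ∪ B (n + m) ∪ Nul)).trans ?_
      rw [add_comm]
      gcongr
      exact (measure_mono Set.inter_subset_right).trans hbad
    have h2 : μ X / 2 ≠ ⊤ := (ENNReal.div_lt_top (measure_ne_top _ _) (by norm_num)).ne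
    rw [← ENNReal.add_le_add_iff_right h2, ENNReal.add_halves]
    exact h1
  obtain ⟨S, hSZ, hScard, hSsep⟩ := hsep n hmN₀ Z Set.sdiff_subset
    (hXm.diff (((hBm _).union (hBm _)).union hNulm)) hZμ
  have hgood : ∀ x ∈ Z, ∀ l ∈ ({n, n + m} : Set ℕ), ∀ i,
      |birkhoffAverage ℝ f (φ i) l x - ∫ y, φ i y ∂μ| < η i := by
    intro x hx l hl i
    by_contra! hcon
    rcases hl with rfl | rfl
    · exact hx.2 (Or.inl (Or.inl (Set.mem_iUnion.2 ⟨i, hcon⟩)))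
    · exact hx.2 (Or.inl (Or.inr (Set.mem_iUnion.2 ⟨i, hcon⟩)))
  have hret : ∀ x ∈ S, ∃ pN : M × ℕ, pN ∈ t ×ˢ Finset.Ico n (n + m) ∧
      x ∈ Q pN.1 ∧ f^[pN.2] x ∈ Q pN.1 := by
    intro x hx
    have hxZ := hSZ hx
    obtain ⟨p, hpt, hxp⟩ := Set.mem_iUnion₂.1 (hcov hxZ.1)
    have hxQ : x ∈ Q p := ⟨hxZ.1, hxp⟩
    have hp0 : μ (Q p) ≠ 0 := fun h0 =>
      hxZ.2 (Or.inr (Set.mem_iUnion₂.2 ⟨p, Finset.mem_filter.2 ⟨hpt, h0⟩, hxQ⟩))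
    let p' : J := ⟨p, Finset.mem_filter.2 ⟨hpt, hp0⟩⟩
    have hq : ∫ y, φ (Sum.inr p') y ∂μ = μ.real (Q p) := integral_indicator_one (hQm p)
    have h1 := hgood x hxZ n (by simp) (Sum.inr p')
    have h2 := hgood x hxZ (n + m) (by simp) (Sum.inr p')
    rw [hq] at h1 h2
    obtain ⟨N, hN1, hN2, hN3⟩ := exists_visit (η := η (Sum.inr p')) hm0
      (mul_div_cancel₀ _ (by positivity)).le hL0 h1 h2
    exact ⟨(p, N), Finset.mem_product.2 ⟨hpt, Finset.mem_Ico.2 ⟨hN1, hN2⟩⟩, hxQ, hN3⟩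
  choose! F hFmem hFQ hFret using hret
  have htne : t.Nonempty := by
    obtain ⟨x, hx⟩ := nonempty_of_measure_ne_zero hXpos.ne'
    obtain ⟨p, hp, -⟩ := Set.mem_iUnion₂.1 (hcov hx)
    exact ⟨p, hp⟩
  have hpig : (t ×ˢ Finset.Ico n (n + m)).card • Real.exp (n * (h - 4 * ξ)) ≤ (S.card : ℝ) := by
    refine le_trans ?_ hScard
    rw [Finset.card_product, Nat.card_Ico, Nat.add_sub_cancel_left, nsmul_eq_mul]
    calc ((t.card * m : ℕ) : ℝ) * Real.exp (n * (h - 4 * ξ))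
        ≤ Real.exp (3 * ξ * L * m) * Real.exp (n * (h - 4 * ξ)) := by
          push_cast; gcongr
      _ = Real.exp (n * (h - ξ)) := by
          rw [← Real.exp_add, hn]; push_cast; ring_nf
  obtain ⟨⟨p, N⟩, hpN, hcard⟩ := Finset.exists_le_card_fiber_of_nsmul_le_card_of_maps_to
    hFmem (htne.product (Finset.nonempty_Ico.2 (by omega))) hpig
  obtain ⟨hpt, hNI⟩ := Finset.mem_product.1 hpN
  obtain ⟨hnN, hNnm⟩ := Finset.mem_Ico.1 hNI
  simp only at hpt hnN hNnm
  refine ⟨N, hmN₀.trans hnN, p, htX p hpt, S.filter fun x => F x = (p, N), ?_, ?_, ?_, ?_, ?_⟩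
  · intro x hx
    obtain ⟨hxS, hxF⟩ := Finset.mem_filter.1 hx
    simpa only [hxF] using hFQ x hxS
  · intro x hx y hy hxy
    obtain ⟨j, hj, hd⟩ := hSsep x (Finset.mem_filter.1 hx).1 y (Finset.mem_filter.1 hy).1 hxy
    exact ⟨j, hj.trans_le hnN, hd⟩
  · intro x hx
    obtain ⟨hxS, hxF⟩ := Finset.mem_filter.1 hx
    simpa only [hxF] using hFret x hxS
  · intro x hx i
    have h1 := hgood x (hSZ (Finset.mem_filter.1 hx).1) n (by simp) (Sum.inl i)
    have h2 := birkhoffAverage_window hγ hn0 hnN hNnm.le (fun y => hC i (f y)) (hI i) hLC h1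
    rw [hint i] at h2
    simpa only [birkhoffAverage, birkhoffSum, smul_eq_mul, one_div, Function.comp_apply,
      Function.iterate_succ_apply'] using h2
  · refine le_trans (Real.exp_le_exp.2 ?_) hcard
    refine exponent_le (m := m) hh hξ hξδ (Nat.cast_nonneg n) ?_ (by exact_mod_cast hnN)
      (by exact_mod_cast hNnm.le)
    rw [hn]
    push_cast
    nlinarith [mul_le_mul_of_nonneg_right hLξ (Nat.cast_nonneg (α := ℝ) m)]
end
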